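/- Let 1 < p ≤ q < p*, let Ω ⊂ ℝ^N be an open bounded convex set, and let u be a Lipschitz function on the closure of Ω with ∫_Ω |u|^{q−2} u dx = 0, ∫_Ω |u|^q dx = 1, and ∫_Ω |∇u|^p dx = μ_{p,q}(Ω) (i.e., u attains the infimum defining μ_{p,q}(Ω)). Then every connected component of the open set {x ∈ Ω : u(x) > 0} and every connected component of {x ∈ Ω : u(x) < 0} has closure intersecting ∂Ω; that is, no nodal domain of u is compactly contained in Ω, so u has no closed interior nodal line. -/

import Mathlib

open MeasureTheory Metric Set Real

noncomputable section

/-- The Rayleigh quotient `(∫_Ω |∇v|^p) / (∫_Ω |v|^q)^(p/q)`, where the gradient is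
understood as the (a.e. defined) Fréchet derivative. -/
def rayleighQuot {N : ℕ} (p q : ℝ) (Ω : Set (EuclideanSpace ℝ (Fin N)))
    (v : EuclideanSpace ℝ (Fin N) → ℝ) : ℝ :=
  (∫ x in Ω, ‖fderiv ℝ v x‖ ^ p) / (∫ x in Ω, |v x| ^ q) ^ (p / q)

/-- The first (generalized) Dirichlet eigenvalue `λ_{p,q}(Ω)`: infimum of the Rayleigh
quotient over nontrivial smooth functions compactly supported in `Ω`. -/
def lambdaPQ {N : ℕ} (p q : ℝ) (Ω : Set (EuclideanSpace ℝ (Fin N))) : ℝ :=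
  sInf { R : ℝ | ∃ v : EuclideanSpace ℝ (Fin N) → ℝ,
    ContDiff ℝ (⊤ : ℕ∞) v ∧ HasCompactSupport v ∧ tsupport v ⊆ Ω ∧
    (∃ x ∈ Ω, v x ≠ 0) ∧ R = rayleighQuot p q Ω v }

/-- The first nontrivial (generalized) Neumann eigenvalue `μ_{p,q}(Ω)`: infimum of the
Rayleigh quotient over nontrivial Lipschitz functions on the closure of `Ω` satisfying
the constraint `∫_Ω |v|^(q-2) v = 0`. -/
def muPQ {N : ℕ} (p q : ℝ) (Ω : Set (EuclideanSpace ℝ (Fin N))) : ℝ :=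
  sInf { R : ℝ | ∃ v : EuclideanSpace ℝ (Fin N) → ℝ, ∃ K : NNReal,
    LipschitzOnWith K v (closure Ω) ∧ (∃ x ∈ Ω, v x ≠ 0) ∧
    (∫ x in Ω, |v x| ^ (q - 2) * v x) = 0 ∧ R = rayleighQuot p q Ω v }

/-- `q` is below the critical Sobolev exponent `p* = Np/(N-p)` (with `p* = ∞` if `p ≥ N`). -/
def ltCritical (N : ℕ) (p q : ℝ) : Prop := p < N → q < N * p / (N - p)

end

section helpers
open scoped ENNReal NNReal Pointwise

theorem bm_one_compact {K L C : Set ℝ} (hK : IsCompact K) (hL : IsCompact L)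
    (hKn : K.Nonempty) (hLn : L.Nonempty)
    (hC : ∀ a ∈ K, ∀ b ∈ L, a + b ∈ C) : volume K + volume L ≤ volume C := by
  obtain ⟨a, ha, hamax⟩ := hK.exists_isGreatest hKn
  obtain ⟨b, hb, hbmin⟩ := hL.exists_isLeast hLn
  have h1 : volume K = volume ((fun x => x + b) '' K) := by
    simp
  have h2 : volume L = volume ((fun x => a + x) '' L) := by
    simp
  have hm : MeasurableSet ((fun x => a + x) '' L) := by
    apply IsCompact.measurableSet
    exact hL.image (by fun_prop)
  have h0 : volume (((fun x => x + b) '' K) ∩ ((fun x => a + x) '' L)) = 0 := by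
    apply measure_mono_null (t := {a + b}) _ (by simp)
    rintro z ⟨⟨x, hx, rfl⟩, ⟨y, hy, hxy⟩⟩
    have := hamax hx
    have := hbmin hy
    simp only [mem_singleton_iff] at *
    linarith
  rw [h1, h2, ← measure_union_add_inter _ hm, h0, add_zero]
  apply measure_mono
  rintro z (⟨x, hx, rfl⟩ | ⟨x, hx, rfl⟩)
  · exact hC _ hx _ hb
  · exact hC _ ha _ hx

theorem bm_one {A B C : Set ℝ} (hA : MeasurableSet A) (hB : MeasurableSet B)
    (hAn : A.Nonempty) (hBn : B.Nonempty)
    (hC : ∀ a ∈ A, ∀ b ∈ B, a + b ∈ C) : volume A + volume B ≤ volume C := by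
  obtain ⟨a0, ha0⟩ := hAn
  obtain ⟨b0, hb0⟩ := hBn
  rw [hA.measure_eq_iSup_isCompact, hB.measure_eq_iSup_isCompact]
  have key := ENNReal.biSup_add_biSup_le' (f := fun K : Set ℝ => volume K)
    (g := fun K : Set ℝ => volume K) (a := volume C)
    (p := fun K => K ⊆ A ∧ IsCompact K) (q := fun K => K ⊆ B ∧ IsCompact K)
    ⟨∅, by simp⟩ ⟨∅, by simp⟩ (by
      rintro K ⟨hK, hKc⟩ L ⟨hL, hLc⟩
      calc volume K + volume L ≤ volume (insert a0 K) + volume (insert b0 L) := by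
            gcongr <;> simp
        _ ≤ volume C := by
            apply bm_one_compact (hKc.insert _) (hLc.insert _) (by simp) (by simp)
            intro a ha b hb
            exact hC _ (insert_subset ha0 hK ha) _ (insert_subset hb0 hL hb))
  simp only [iSup_and] at key
  exact key

theorem bm_one' {A B C : Set ℝ} {l : ℝ} (h0 : 0 < l) (h1 : l < 1) (hA : MeasurableSet A)
    (hB : MeasurableSet B)
    (hAn : A.Nonempty) (hBn : B.Nonempty)
    (hC : ∀ a ∈ A, ∀ b ∈ B, (1 - l) * a + l * b ∈ C) :
    ENNReal.ofReal (1 - l) * volume A + ENNReal.ofReal l * volume B ≤ volume C := by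
  have := bm_one (A := (1 - l) • A) (B := l • B) (C := C) (hA.const_smul₀ _) (hB.const_smul₀ _)
    hAn.smul_set hBn.smul_set ?_
  · rw [Measure.addHaar_smul, Measure.addHaar_smul] at this
    simpa [abs_of_pos h0, abs_of_pos (sub_pos.2 h1)] using this
  · rintro _ ⟨a, ha, rfl⟩ _ ⟨b, hb, rfl⟩
    exact hC a ha b hb

theorem pl_norm {f g h : ℝ → ℝ} {l : ℝ} (h0 : 0 < l) (h1 : l < 1)
    (hf : Measurable f) (hg : Measurable g) (hh : Measurable h)
    (f0 : ∀ x, 0 ≤ f x) (g0 : ∀ x, 0 ≤ g x) (hh0 : ∀ x, 0 ≤ h x)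
    (f1 : ∀ x, f x ≤ 1) (g1 : ∀ x, g x ≤ 1)
    (fs : ∀ s < 1, ∃ x, s < f x) (gs : ∀ s < 1, ∃ x, s < g x)
    (H : ∀ x y, f x ^ (1 - l) * g y ^ l ≤ h ((1 - l) * x + l * y)) :
    ENNReal.ofReal (1 - l) * (∫⁻ x, ENNReal.ofReal (f x)) +
      ENNReal.ofReal l * (∫⁻ x, ENNReal.ofReal (g x)) ≤ ∫⁻ x, ENNReal.ofReal (h x) := by
  rw [lintegral_eq_lintegral_meas_lt _ (ae_of_all _ f0) hf.aemeasurable,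
    lintegral_eq_lintegral_meas_lt _ (ae_of_all _ g0) hg.aemeasurable,
    lintegral_eq_lintegral_meas_lt _ (ae_of_all _ hh0) hh.aemeasurable]
  have mf : Measurable fun t => volume {a | t < f a} :=
    Antitone.measurable fun s t hst => measure_mono fun x (hx : t < f x) => lt_of_le_of_lt hst hx
  have mg : Measurable fun t => volume {a | t < g a} :=
    Antitone.measurable fun s t hst => measure_mono fun x (hx : t < g x) => lt_of_le_of_lt hst hx
  rw [← lintegral_const_mul _ mf, ← lintegral_const_mul _ mg,
    ← lintegral_add_left (by fun_prop)]
  apply lintegral_mono_ae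
  filter_upwards [ae_restrict_mem measurableSet_Ioi] with t ht
  simp only [mem_Ioi] at ht
  rcases lt_or_ge t 1 with h | h
  · apply bm_one' h0 h1 (measurableSet_lt measurable_const hf)
      (measurableSet_lt measurable_const hg) (fs t h) (gs t h)
    intro a ha b hb
    simp only [mem_ofPred_eq] at *
    refine lt_of_lt_of_le ?_ (H a b)
    calc t = t ^ (1 - l) * t ^ l := by rw [← rpow_add ht]; simp
      _ < _ := by
        have e1 := rpow_lt_rpow ht.le ha (sub_pos.2 h1)
        have e2 := rpow_lt_rpow ht.le hb h0
        gcongr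
  · have e1 : {a | t < f a} = ∅ := by
      ext x; simp; linarith [f1 x]
    have e2 : {a | t < g a} = ∅ := by
      ext x; simp; linarith [g1 x]
    simp [e1, e2]

theorem amgm_enn {a b : ℝ≥0∞} {l : ℝ} (h0 : 0 < l) (h1 : l < 1) :
    a ^ (1 - l) * b ^ l ≤ ENNReal.ofReal (1 - l) * a + ENNReal.ofReal l * b := by
  have h1' := sub_pos.2 h1
  rcases eq_or_ne a ⊤ with rfl | ha
  · rw [ENNReal.mul_top (by simp; linarith)]; simp
  rcases eq_or_ne b ⊤ with rfl | hb
  · rw [ENNReal.mul_top (by simp; linarith : ENNReal.ofReal l ≠ 0)]; simp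
  lift a to ℝ≥0 using ha
  lift b to ℝ≥0 using hb
  have := NNReal.geom_mean_le_arith_mean2_weighted (1-l).toNNReal l.toNNReal a b
    (by rw [← Real.toNNReal_add h1'.le h0.le]; simp)
  rw [Real.coe_toNNReal _ h1'.le, Real.coe_toNNReal _ h0.le] at this
  rw [← ENNReal.coe_rpow_of_nonneg _ h1'.le, ← ENNReal.coe_rpow_of_nonneg _ h0.le]
  unfold ENNReal.ofReal
  exact_mod_cast this

theorem pl_one {f g h : ℝ → ℝ} {l M : ℝ} (h0 : 0 < l) (h1 : l < 1)
    (hf : Measurable f) (hg : Measurable g) (hh : Measurable h)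
    (f0 : ∀ x, 0 ≤ f x) (g0 : ∀ x, 0 ≤ g x) (hh0 : ∀ x, 0 ≤ h x)
    (f1 : ∀ x, f x ≤ M) (g1 : ∀ x, g x ≤ M)
    (H : ∀ x y, f x ^ (1 - l) * g y ^ l ≤ h ((1 - l) * x + l * y)) :
    (∫⁻ x, ENNReal.ofReal (f x)) ^ (1 - l) * (∫⁻ x, ENNReal.ofReal (g x)) ^ l
      ≤ ∫⁻ x, ENNReal.ofReal (h x) := by
  have h1' := sub_pos.2 h1
  have bf : BddAbove (range f) := ⟨M, by rintro _ ⟨x, rfl⟩; exact f1 x⟩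
  have bg : BddAbove (range g) := ⟨M, by rintro _ ⟨x, rfl⟩; exact g1 x⟩
  set F := ⨆ x, f x with hF
  set G := ⨆ x, g x with hG
  have leF : ∀ x, f x ≤ F := le_ciSup bf
  have leG : ∀ x, g x ≤ G := le_ciSup bg
  have F0 : 0 ≤ F := (f0 0).trans (leF 0)
  have G0 : 0 ≤ G := (g0 0).trans (leG 0)
  rcases F0.eq_or_lt with hF0 | hF0
  · have : ∀ x, f x = 0 := fun x => le_antisymm (hF0 ▸ leF x) (f0 x)
    simp [this, h1', h1'.ne']
  rcases G0.eq_or_lt with hG0 | hG0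
  · have : ∀ x, g x = 0 := fun x => le_antisymm (hG0 ▸ leG x) (g0 x)
    simp [this, h0, h0.ne']
  set T := F ^ (1 - l) * G ^ l with hT
  have T0 : 0 < T := by positivity
  have key := pl_norm (f := fun x => f x / F) (g := fun x => g x / G) (h := fun x => h x / T) h0 h1
    (by fun_prop) (by fun_prop) (by fun_prop) (fun x => div_nonneg (f0 x) F0)
    (fun x => div_nonneg (g0 x) G0) (fun x => div_nonneg (hh0 x) T0.le)
    (fun x => (div_le_one hF0).2 (leF x)) (fun x => (div_le_one hG0).2 (leG x))
    (by
      intro s hs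
      obtain ⟨x, hx⟩ := exists_lt_of_lt_ciSup (show s * F < ⨆ x, f x by rw [← hF]; nlinarith)
      exact ⟨x, (lt_div_iff₀ hF0).2 hx⟩)
    (by
      intro s hs
      obtain ⟨x, hx⟩ := exists_lt_of_lt_ciSup (show s * G < ⨆ x, g x by rw [← hG]; nlinarith)
      exact ⟨x, (lt_div_iff₀ hG0).2 hx⟩)
    (by
      intro x y
      rw [div_rpow (f0 x) F0, div_rpow (g0 y) G0, div_mul_div_comm]
      gcongr
      exact H x y)
  have key2 := amgm_enn (a := ∫⁻ x, ENNReal.ofReal (f x / F)) (b := ∫⁻ x, ENNReal.ofReal (g x / G))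
    h0 h1 |>.trans key
  have sc : ∀ (k : ℝ → ℝ) (c : ℝ), Measurable k → 0 < c → (∫⁻ x, ENNReal.ofReal (k x / c)) =
      (∫⁻ x, ENNReal.ofReal (k x)) * (ENNReal.ofReal c)⁻¹ := by
    intro k c hk hc
    rw [← lintegral_mul_const _ (by fun_prop)]
    congr 1; ext x
    rw [ENNReal.ofReal_div_of_pos hc, div_eq_mul_inv]
  rw [sc f F hf hF0, sc g G hg hG0, sc h T hh T0, ENNReal.mul_rpow_of_nonneg _ _ h1'.le,
    ENNReal.mul_rpow_of_nonneg _ _ h0.le, mul_mul_mul_comm, ENNReal.inv_rpow, ENNReal.inv_rpow,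
    ENNReal.ofReal_rpow_of_pos hF0, ENNReal.ofReal_rpow_of_pos hG0] at key2
  rw [← ENNReal.mul_inv (by left; simp; positivity) (by left; simp), ← ENNReal.ofReal_mul (by positivity), ← hT] at key2
  have t1 : ENNReal.ofReal T ≠ 0 := by simp; exact T0
  exact (ENNReal.mul_le_mul_iff_left (ENNReal.inv_ne_zero.2 (by simp)) (ENNReal.inv_ne_top.2 t1)).1 key2

theorem bm_pi (n : ℕ) : ∀ {l : ℝ} (_ : 0 < l) (_ : l < 1) (A B C : Set (Fin n → ℝ)),
    MeasurableSet A → MeasurableSet B → MeasurableSet C →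
    Bornology.IsBounded A → Bornology.IsBounded B → Bornology.IsBounded C →
    (∀ a ∈ A, ∀ b ∈ B, (1 - l) • a + l • b ∈ C) →
    volume A ^ (1 - l) * volume B ^ l ≤ volume C := by
  induction n with
  | zero =>
    intro l h0 h1 A B C hA hB hC bA bB bC H
    have h1' := sub_pos.2 h1
    rcases A.eq_empty_or_nonempty with rfl | ⟨a, ha⟩
    · simp [h1']
    rcases B.eq_empty_or_nonempty with rfl | ⟨b, hb⟩
    · simp [h0]
    have : C = univ := by
      ext x; simp; convert H a ha b hb
    have hA' : A = univ := by ext x; simp; convert ha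
    have hB' : B = univ := by ext x; simp; convert hb
    rw [this, hA', hB', volume_pi, Measure.pi_univ]
    simp
  | succ n ih =>
    intro l h0 h1 A B C hA hB hC bA bB bC H
    have h1' := sub_pos.2 h1
    let e := MeasurableEquiv.piFinSuccAbove (fun _ : Fin (n + 1) => ℝ) 0
    have he : MeasurePreserving e := volume_preserving_piFinSuccAbove _ 0
    have hes : ∀ (t : ℝ) (y : Fin n → ℝ), e.symm (t, y) = Fin.cons t y := by
      intro t y
      simp [e, MeasurableEquiv.piFinSuccAbove]
      rfl
    let S : Set (Fin (n + 1) → ℝ) → ℝ → Set (Fin n → ℝ) := fun A t => {y | (Fin.cons t y : Fin (n+1) → ℝ) ∈ A}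
    have hSe : ∀ A t, S A t = Prod.mk t ⁻¹' (e.symm ⁻¹' A) := by
      intro A t
      ext y
      simp [S, hes]
    have mS : ∀ A t, MeasurableSet A → MeasurableSet (S A t) := by
      intro A t hA
      have : S A t = (fun y => e.symm (t, y)) ⁻¹' A := by ext y; simp [S, hes]
      rw [this]
      exact (e.symm.measurable.comp measurable_prodMk_left) hA
    have hvol : ∀ A, MeasurableSet A → volume A = ∫⁻ t, volume (S A t) := by
      intro A hA
      rw [← he.symm.measure_preimage hA.nullMeasurableSet, Measure.volume_eq_prod, Measure.prod_apply (e.symm.measurable hA)]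
      simp only [hSe]
    have mvol : ∀ A, MeasurableSet A → Measurable fun t => volume (S A t) := by
      intro A hA
      simp only [hSe]
      exact measurable_measure_prodMk_left (ν := volume) (e.symm.measurable hA)
    have bdd : ∀ A : Set (Fin (n+1) → ℝ), Bornology.IsBounded A → ∃ R : ℝ, ∀ t, S A t ⊆ closedBall 0 R := by
      intro A hA
      obtain ⟨R, hR⟩ := hA.subset_closedBall 0
      refine ⟨R, fun t y hy => ?_⟩
      have := hR hy
      simp only [mem_closedBall, dist_zero_right] at *
      refine le_trans ?_ this
      rw [pi_norm_le_iff_of_nonneg (norm_nonneg _)]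
      intro i
      have := norm_le_pi_norm (Fin.cons t y : Fin (n+1) → ℝ) i.succ
      simpa using this
    obtain ⟨RA, hRA⟩ := bdd A bA
    obtain ⟨RB, hRB⟩ := bdd B bB
    obtain ⟨RC, hRC⟩ := bdd C bC
    have fin : ∀ (A : Set (Fin (n+1) → ℝ)) (R : ℝ) (_ : ∀ t, S A t ⊆ closedBall 0 R) t, volume (S A t) ≠ ⊤ := by
      intro A R h t
      exact ((measure_mono (h t)).trans_lt measure_closedBall_lt_top).ne
    have key := pl_one (f := fun t => (volume (S A t)).toReal) (g := fun t => (volume (S B t)).toReal)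
      (h := fun t => (volume (S C t)).toReal)
      (M := max (volume (closedBall (0 : Fin n → ℝ) RA)).toReal (volume (closedBall (0 : Fin n → ℝ) RB)).toReal)
      h0 h1 (mvol A hA).ennreal_toReal
      (mvol B hB).ennreal_toReal (mvol C hC).ennreal_toReal (fun _ => ENNReal.toReal_nonneg)
      (fun _ => ENNReal.toReal_nonneg) (fun _ => ENNReal.toReal_nonneg)
      (fun t => le_max_of_le_left (ENNReal.toReal_mono measure_closedBall_lt_top.ne (measure_mono (hRA t))))
      (fun t => le_max_of_le_right (ENNReal.toReal_mono measure_closedBall_lt_top.ne (measure_mono (hRB t))))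
      (by
        intro x y
        rw [ENNReal.toReal_rpow, ENNReal.toReal_rpow, ← ENNReal.toReal_mul]
        apply ENNReal.toReal_mono (fin C RC hRC _)
        apply ih h0 h1 _ _ _ (mS _ _ hA) (mS _ _ hB) (mS _ _ hC)
        · exact isBounded_closedBall.subset (hRA _)
        · exact isBounded_closedBall.subset (hRB _)
        · exact isBounded_closedBall.subset (hRC _)
        intro a ha b hb
        have := H _ ha _ hb
        simp only [S, mem_ofPred_eq]
        convert this using 1
        ext i
        refine Fin.cases ?_ (fun j => ?_) i <;> simp)
    simp only [ENNReal.ofReal_toReal (fin A RA hRA _), ENNReal.ofReal_toReal (fin B RB hRB _),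
      ENNReal.ofReal_toReal (fin C RC hRC _)] at key
    rw [hvol A hA, hvol B hB, hvol C hC]
    exact key

theorem bm_euc {N : ℕ} {l : ℝ} (h0 : 0 < l) (h1 : l < 1) (A B C : Set (EuclideanSpace ℝ (Fin N)))
    (hA : MeasurableSet A) (hB : MeasurableSet B) (hC : MeasurableSet C)
    (bA : Bornology.IsBounded A) (bB : Bornology.IsBounded B) (bC : Bornology.IsBounded C)
    (H : ∀ a ∈ A, ∀ b ∈ B, (1 - l) • a + l • b ∈ C) :
    volume A ^ (1 - l) * volume B ^ l ≤ volume C := by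
  let T : (Fin N → ℝ) → EuclideanSpace ℝ (Fin N) := WithLp.toLp 2
  have hT : MeasurePreserving T := PiLp.volume_preserving_toLp (Fin N)
  have bd : ∀ A : Set (EuclideanSpace ℝ (Fin N)), Bornology.IsBounded A → Bornology.IsBounded (T ⁻¹' A) := by
    intro A hA
    obtain ⟨R, hR⟩ := hA.subset_closedBall 0
    refine (isBounded_closedBall (x := (0 : Fin N → ℝ)) (r := R)).subset fun x hx => ?_
    have := hR hx
    simp only [mem_closedBall, dist_zero_right] at *
    refine le_trans ?_ this
    rw [pi_norm_le_iff_of_nonneg (norm_nonneg _)]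
    intro i
    exact PiLp.norm_apply_le (T x) i
  rw [← hT.measure_preimage hA.nullMeasurableSet, ← hT.measure_preimage hB.nullMeasurableSet,
    ← hT.measure_preimage hC.nullMeasurableSet]
  apply bm_pi N h0 h1 _ _ _ (hT.measurable hA) (hT.measurable hB) (hT.measurable hC) (bd _ bA) (bd _ bB)
    (bd _ bC)
  intro a ha b hb
  exact H _ ha _ hb

/-- Brunn-Minkowski for set plus ball. -/
theorem bm_ball {N : ℕ} (A : Set (EuclideanSpace ℝ (Fin N))) (hA : IsOpen A)
    (bA : Bornology.IsBounded A) {a h : ℝ} (ha : 0 < a) (hh : 0 < h)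
    (hv : volume (ball (0 : EuclideanSpace ℝ (Fin N)) a) ≤ volume A)
    (C : Set (EuclideanSpace ℝ (Fin N))) (hC : MeasurableSet C) (bC : Bornology.IsBounded C)
    (H : ∀ x ∈ A, ∀ y ∈ ball (0 : EuclideanSpace ℝ (Fin N)) h, x + y ∈ C) :
    volume (ball (0 : EuclideanSpace ℝ (Fin N)) (a + h)) ≤ volume C := by
  set l := h / (a + h) with hl
  have hs : 0 < a + h := by positivity
  have l0 : 0 < l := by positivity
  have l1 : l < 1 := by rw [hl, div_lt_one hs]; linarith
  have e1 : (a + h) * (1 - l) = a := by rw [hl]; field_simp; ring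
  have e2 : (a + h) * l = h := by rw [hl]; field_simp
  have key := bm_euc l0 l1 (a⁻¹ • A) (ball 0 1) ((a + h)⁻¹ • C) (hA.smul₀ (by positivity)).measurableSet
    measurableSet_ball (hC.const_smul₀ _) (bA.smul₀ _) isBounded_ball (bC.smul₀ _) ?_
  · have ea : volume (ball (0 : EuclideanSpace ℝ (Fin N)) 1) ≤ volume (a⁻¹ • A) := by
      rw [Measure.addHaar_smul]
      rw [Measure.addHaar_ball_of_pos _ _ ha] at hv
      rw [abs_of_pos (by positivity), inv_pow, ENNReal.ofReal_inv_of_pos (by positivity)]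
      have : ENNReal.ofReal (a ^ Module.finrank ℝ (EuclideanSpace ℝ (Fin N))) ≠ 0 := by
        simp; positivity
      rw [← ENNReal.div_eq_inv_mul, ENNReal.le_div_iff_mul_le (Or.inl this) (Or.inl (by simp)), mul_comm]
      exact hv
    have e3 : volume (ball (0 : EuclideanSpace ℝ (Fin N)) 1) ≤ volume ((a + h)⁻¹ • C) := by
      refine le_trans ?_ key
      calc volume (ball (0 : EuclideanSpace ℝ (Fin N)) 1)
          = volume (ball (0 : EuclideanSpace ℝ (Fin N)) 1) ^ (1 - l) * volume (ball (0 : EuclideanSpace ℝ (Fin N)) 1) ^ l := by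
            rw [← ENNReal.rpow_add _ _ (measure_ball_pos _ _ one_pos).ne' measure_ball_lt_top.ne]; simp
        _ ≤ _ := by gcongr
    rw [Measure.addHaar_smul, abs_of_pos (by positivity), inv_pow, ENNReal.ofReal_inv_of_pos (by positivity)] at e3
    rw [Measure.addHaar_ball_of_pos _ _ hs]
    have : ENNReal.ofReal ((a+h) ^ Module.finrank ℝ (EuclideanSpace ℝ (Fin N))) ≠ 0 := by
        simp; positivity
    rw [← ENNReal.div_eq_inv_mul, ENNReal.le_div_iff_mul_le (Or.inl this) (Or.inl (by simp)), mul_comm] at e3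
    exact e3
  · rintro _ ⟨x, hx, rfl⟩ y hy
    refine ⟨x + h • y, H x hx _ ?_, ?_⟩
    · simp only [mem_ball, dist_zero_right] at *
      rw [norm_smul, norm_of_nonneg hh.le]; nlinarith
    · simp only [smul_add, smul_smul]
      congr 2
      · have : 1 - l = a / (a + h) := by rw [hl]; field_simp; ring
        rw [this]; field_simp
      · rw [hl]; field_simp

/-- Isodiametric inequality. -/
theorem isodiam {N : ℕ} (A : Set (EuclideanSpace ℝ (Fin N))) (hA : IsOpen A)
    (bA : Bornology.IsBounded A) {d : ℝ} (hd : ∀ x ∈ A, ∀ y ∈ A, dist x y ≤ d) :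
    volume A ≤ volume (closedBall (0 : EuclideanSpace ℝ (Fin N)) (d / 2)) := by
  have key := bm_euc (l := 1/2) (by norm_num) (by norm_num) A ((-1 : ℝ) • A) (closedBall 0 (d/2)) hA.measurableSet
    (hA.measurableSet.const_smul₀ _) measurableSet_closedBall bA (bA.smul₀ _) isBounded_closedBall ?_
  · refine le_trans ?_ key
    rw [Measure.addHaar_smul]
    simp only [abs_neg, abs_one, one_pow, abs_pow, ENNReal.ofReal_one, one_mul]
    rcases eq_or_ne (volume A) 0 with h | h
    · simp [h]
    rw [← ENNReal.rpow_add _ _ h bA.measure_lt_top.ne]; norm_num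
  · rintro x hx _ ⟨y, hy, rfl⟩
    have := hd x hx y hy
    rw [dist_eq_norm] at this
    simp only [mem_closedBall, dist_zero_right]
    have e : (1 - (1/2 : ℝ)) • x + (1 / 2 : ℝ) • (-1 : ℝ) • y = (1/2 : ℝ) • (x - y) := by
      module
    change ‖(1 - (1/2 : ℝ)) • x + (1 / 2 : ℝ) • (-1 : ℝ) • y‖ ≤ _
    rw [e, norm_smul]; norm_num; linarith

/-- Hopf-Lax sup-convolution. -/
noncomputable def HL {F : Type*} [NormedAddCommGroup F] [NormedSpace ℝ F] (f : F → ℝ) (p' h : ℝ)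
    (x : F) : ℝ := ⨆ v : F, (f (x + h • v) - h * (‖v‖ ^ p' / p'))

section HLsec
variable {F : Type*} [NormedAddCommGroup F] [NormedSpace ℝ F] {f : F → ℝ} {p p' h W : ℝ} {L : ℝ≥0}

theorem HL_bdd (hp : p.HolderConjugate p') (hh : 0 < h) (hW : ∀ x, f x ≤ W) (x : F) :
    BddAbove (range fun v : F => (f (x + h • v) - h * (‖v‖ ^ p' / p'))) := by
  refine ⟨W, ?_⟩
  rintro _ ⟨v, rfl⟩
  have : 0 < p' := hp.symm.pos
  have : 0 ≤ h * (‖v‖ ^ p' / p') := by positivity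
  simp only
  linarith [hW (x + h • v)]

theorem HL_lt_iff (hp : p.HolderConjugate p') (hh : 0 < h) (hW : ∀ x, f x ≤ W) (x : F) (t : ℝ) :
    t < HL f p' h x ↔ ∃ v : F, t < f (x + h • v) - h * (‖v‖ ^ p' / p') :=
  lt_ciSup_iff (HL_bdd hp hh hW x)

theorem HL_ge (hp : p.HolderConjugate p') (hh : 0 < h) (hW : ∀ x, f x ≤ W) (x v : F) :
    f (x + h • v) - h * (‖v‖ ^ p' / p') ≤ HL f p' h x :=
  le_ciSup (HL_bdd hp hh hW x) v

theorem HL_ge_self (hp : p.HolderConjugate p') (hh : 0 < h) (hW : ∀ x, f x ≤ W) (x : F) :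
    f x ≤ HL f p' h x := by
  have := HL_ge hp hh hW x 0
  simpa [zero_rpow hp.symm.pos.ne'] using this

theorem HL_open (hp : p.HolderConjugate p') (hh : 0 < h) (hW : ∀ x, f x ≤ W)
    (hf : Continuous f) (t : ℝ) : IsOpen {x | t < HL f p' h x} := by
  have : {x | t < HL f p' h x} = ⋃ v : F, {x | t < f (x + h • v) - h * (‖v‖ ^ p' / p')} := by
    ext x
    simp [HL_lt_iff hp hh hW x t]
  rw [this]
  apply isOpen_iUnion
  intro v
  apply isOpen_lt continuous_const
  fun_prop

theorem HL_meas [MeasurableSpace F] [BorelSpace F] (hp : p.HolderConjugate p') (hh : 0 < h)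
    (hW : ∀ x, f x ≤ W) (hf : Continuous f) : Measurable (HL f p' h) :=
  measurable_of_Ioi fun t => (HL_open hp hh hW hf t).measurableSet

theorem HL_le (hp : p.HolderConjugate p') (hh : 0 < h) (hf : LipschitzWith L f) (x : F) :
    HL f p' h x ≤ f x + h * (L ^ p / p) := by
  apply ciSup_le
  intro v
  have h1 : f (x + h • v) ≤ f x + L * (h * ‖v‖) := by
    have := hf.le_add_mul (x + h • v) x
    simpa [norm_smul, abs_of_pos hh] using this
  have h2 := young_inequality_of_nonneg (L.2) (norm_nonneg v) hp
  have h3 := mul_le_mul_of_nonneg_left h2 hh.le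
  simp only [NNReal.val_eq_coe] at h3
  linarith

theorem exists_Vm (hp : p.HolderConjugate p') (L : ℝ≥0) :
    ∃ Vm : ℝ, 0 < Vm ∧ ∀ s, Vm ≤ s → L * s ≤ s ^ p' / p' := by
  have h1 : 0 < p' := hp.symm.pos
  have h2 : 0 < p' - 1 := by linarith [hp.symm.lt]
  refine ⟨(p' * (L + 1)) ^ (1 / (p' - 1)), by positivity, fun s hs => ?_⟩
  have h0 : 0 < (p' * ((L : ℝ) + 1)) ^ (1 / (p' - 1)) := by positivity
  have s0 : 0 < s := h0.trans_le hs
  have h3 : p' * (L + 1) ≤ s ^ (p' - 1) := by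
    have := rpow_le_rpow h0.le hs h2.le
    rw [← rpow_mul (by positivity)] at this
    rwa [one_div_mul_cancel h2.ne', rpow_one] at this
  have h4 : s ^ p' = s * s ^ (p' - 1) := by
    rw [← rpow_one_add' s0.le (by linarith)]; ring_nf
  rw [le_div_iff₀ h1, h4]
  nlinarith

theorem HL_far (hp : p.HolderConjugate p') (hh : 0 < h) (hf : LipschitzWith L f) {Vm : ℝ}
    (hV : ∀ s, Vm ≤ s → L * s ≤ s ^ p' / p') (x v : F) (hv : Vm ≤ ‖v‖) :
    f (x + h • v) - h * (‖v‖ ^ p' / p') ≤ f x := by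
  have h1 : f (x + h • v) ≤ f x + L * (h * ‖v‖) := by
    have := hf.le_add_mul (x + h • v) x
    simpa [norm_smul, abs_of_pos hh] using this
  have := mul_le_mul_of_nonneg_left (hV _ hv) hh.le
  linarith

theorem HL_zero (hp : p.HolderConjugate p') (hh : 0 < h) (h1 : h ≤ 1) (hf : LipschitzWith L f) {Vm R : ℝ}
    (V0 : 0 < Vm) (hV : ∀ s, Vm ≤ s → L * s ≤ s ^ p' / p') (hR : ∀ x, R ≤ ‖x‖ → f x = 0) (x : F)
    (hx : R + Vm ≤ ‖x‖) : HL f p' h x ≤ 0 := by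
  apply ciSup_le
  intro v
  have fx : f x = 0 := hR x (by linarith)
  rcases le_total Vm ‖v‖ with h | h2
  · exact (HL_far hp hh hf hV x v h).trans fx.le
  · have : 0 < p' := hp.symm.pos
    rw [hR]
    · have : 0 ≤ h * (‖v‖ ^ p' / p') := by positivity
      linarith
    · have e := norm_sub_norm_le x (-(h • v))
      rw [norm_neg, norm_smul, norm_of_nonneg hh.le, sub_neg_eq_add] at e
      nlinarith [norm_nonneg v]

theorem HL_upper (hp : p.HolderConjugate p') (hf : LipschitzWith L f) {x : F} {D : F →L[ℝ] ℝ}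
    (hD : HasFDerivAt f D x) {η : ℝ} (hη : 0 < η) :
    ∃ δ > 0, ∀ h, 0 < h → h < δ → HL f p' h x ≤ f x + h * (‖D‖ ^ p / p + η) := by
  obtain ⟨Vm, V0, hV⟩ := exists_Vm hp L
  have hp0 : 0 < p := hp.pos
  have := hasFDerivAt_iff_isLittleO_nhds_zero.1 hD
  have := this.def (c := η / Vm) (by positivity)
  rw [Metric.eventually_nhds_iff] at this
  obtain ⟨δ, δ0, hδ⟩ := this
  refine ⟨δ / Vm, by positivity, fun h hh hhδ => ?_⟩
  apply ciSup_le
  intro v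
  rcases le_total Vm ‖v‖ with h2 | h2
  · have := HL_far hp hh hf hV x v h2
    have : 0 ≤ h * (‖D‖ ^ p / p + η) := by positivity
    linarith
  · have hn : ‖h • v‖ = h * ‖v‖ := by rw [norm_smul, norm_of_nonneg hh.le]
    have h3 := hδ (y := h • v) (by
      rw [dist_zero_right, hn]
      rw [lt_div_iff₀ V0] at hhδ
      nlinarith)
    rw [hn, Real.norm_eq_abs] at h3
    have h4 := (abs_le.1 h3).2
    have h5 : D (h • v) ≤ h * (‖D‖ * ‖v‖) := by
      rw [map_smul, smul_eq_mul]
      gcongr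
      exact (le_abs_self _).trans (D.le_opNorm v)
    have h6 := mul_le_mul_of_nonneg_left (young_inequality_of_nonneg (norm_nonneg D) (norm_nonneg v) hp) hh.le
    have h7 : η / Vm * (h * ‖v‖) ≤ h * η := by
      rw [div_mul_eq_mul_div, div_le_iff₀ V0]
      have := mul_le_mul_of_nonneg_left h2 (by positivity : 0 ≤ η * h)
      linarith
    linarith

end HLsec

theorem HL_limsup {F : Type*} [NormedAddCommGroup F] [NormedSpace ℝ F] {f : F → ℝ} {p p' : ℝ} {L : ℝ≥0}
    (hp : p.HolderConjugate p') (hf : LipschitzWith L f) {x : F} (hD : DifferentiableAt ℝ f x) :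
    Filter.limsup (fun n : ℕ => ENNReal.ofReal ((HL f p' (1 / ((n : ℝ) + 1)) x - f x) / (1 / ((n : ℝ) + 1)))) Filter.atTop
      ≤ ENNReal.ofReal (‖fderiv ℝ f x‖ ^ p / p) := by
  have hp0 : 0 < p := hp.pos
  apply ENNReal.le_of_forall_pos_le_add
  intro ε hε _
  obtain ⟨δ, δ0, hδ⟩ := HL_upper hp hf hD.hasFDerivAt (η := ε) (by exact_mod_cast hε)
  have : ENNReal.ofReal (‖fderiv ℝ f x‖ ^ p / p) + ε = ENNReal.ofReal (‖fderiv ℝ f x‖ ^ p / p + ε) := by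
    rw [ENNReal.ofReal_add (by positivity) (by positivity)]; simp
  rw [this]
  apply Filter.limsup_le_of_le
  · isBoundedDefault
  have := (tendsto_one_div_add_atTop_nhds_zero_nat (𝕜 := ℝ)).eventually (gt_mem_nhds δ0)
  filter_upwards [this] with n hn
  apply ENNReal.ofReal_le_ofReal
  have hpos : 0 < 1 / ((n : ℝ) + 1) := by positivity
  rw [div_le_iff₀ hpos]
  linarith [hδ _ hpos hn]

theorem HL_liminf {f : ℝ → ℝ} {p p' W : ℝ} (hp : p.HolderConjugate p') (hW : ∀ x, f x ≤ W) (x : ℝ) :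
    ENNReal.ofReal (|deriv f x| ^ p / p) ≤
    Filter.liminf (fun n : ℕ => ENNReal.ofReal ((HL f p' (1 / ((n : ℝ) + 1)) x - f x) / (1 / ((n : ℝ) + 1)))) Filter.atTop := by
  have hp0 : 0 < p := hp.pos
  have hp0' : 0 < p' := hp.symm.pos
  by_cases hd : DifferentiableAt ℝ f x
  swap
  · rw [deriv_zero_of_not_differentiableAt hd]
    simp [zero_rpow hp0.ne']
  set D := deriv f x with hDdef
  set s : ℝ := SignType.sign D * |D| ^ (p - 1) with hs
  have e1 : D * s - |s| ^ p' / p' = |D| ^ p / p := by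
    rcases eq_or_ne D 0 with h | h
    · simp [hs, h, zero_rpow hp0.ne', zero_rpow hp0'.ne']
    have hD0 : 0 < |D| := abs_pos.2 h
    have a1 : D * s = |D| ^ p := by
      rw [hs, ← mul_assoc, mul_comm D, sign_mul_self, ← rpow_one_add' hD0.le (by linarith)]
      ring_nf
    have a2 : |s| = |D| ^ (p - 1) := by
      rw [hs, abs_mul, abs_of_nonneg (a := |D| ^ (p-1)) (by positivity)]
      rcases lt_or_gt_of_ne h with h | h <;> simp [h]
    rw [a1, a2, ← rpow_mul hD0.le, hp.sub_one_mul_conj]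
    have := hp.inv_add_inv_eq_one
    have : p'⁻¹ = 1 - p⁻¹ := by linarith
    rw [div_eq_mul_inv, this]; ring
  have t1 : Filter.Tendsto (fun n : ℕ => (f (x + (1 / ((n : ℝ) + 1)) * s) - f x) / (1 / ((n : ℝ) + 1)))
      Filter.atTop (nhds (D * s)) := by
    have hd2 : HasDerivAt (fun h : ℝ => f (x + h * s)) (D * s) 0 := by
      have i1 : HasDerivAt (fun h : ℝ => x + h * s) s 0 := by
        simpa using ((hasDerivAt_id (0:ℝ)).mul_const s).const_add x
      have i2 : HasDerivAt f D (x + 0 * s) := by rw [zero_mul, add_zero]; exact hd.hasDerivAt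
      exact i2.comp (0:ℝ) i1
    rw [hasDerivAt_iff_tendsto_slope_zero] at hd2
    have : Filter.Tendsto (fun n : ℕ => 1 / ((n : ℝ) + 1)) Filter.atTop (nhdsWithin 0 {0}ᶜ) := by
      rw [tendsto_nhdsWithin_iff]
      refine ⟨tendsto_one_div_add_atTop_nhds_zero_nat, Filter.Eventually.of_forall fun n => ?_⟩
      simp; positivity
    have := hd2.comp this
    refine this.congr fun n => ?_
    simp [div_eq_mul_inv, mul_comm]
  have t2 : Filter.Tendsto (fun n : ℕ => ENNReal.ofReal ((f (x + (1 / ((n : ℝ) + 1)) * s) - f x) / (1 / ((n : ℝ) + 1)) - |s| ^ p' / p'))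
      Filter.atTop (nhds (ENNReal.ofReal (|D| ^ p / p))) := by
    apply ENNReal.tendsto_ofReal
    rw [← e1]
    exact t1.sub_const _
  rw [← t2.liminf_eq]
  refine Filter.liminf_le_liminf ?_
  · filter_upwards with n
    apply ENNReal.ofReal_le_ofReal
    have hpos : 0 < 1 / ((n : ℝ) + 1) := by positivity
    have := HL_ge hp hpos hW x s
    rw [le_div_iff₀ hpos, sub_mul, div_mul_cancel₀ _ hpos.ne']
    simp only [smul_eq_mul, Real.norm_eq_abs] at this
    linarith

section Schwarz
variable {N : ℕ}

/-- volume of the centred ball -/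
noncomputable def VB (N : ℕ) (r : ℝ) : ℝ≥0∞ := volume (ball (0 : EuclideanSpace ℝ (Fin N)) r)

theorem VB_mono : Monotone (VB N) := fun _ _ h => measure_mono (ball_subset_ball h)

theorem VB_of_nonneg (hN : 2 ≤ N) {r : ℝ} (hr : 0 ≤ r) : VB N r = ENNReal.ofReal (r ^ N) * VB N 1 := by
  have : Nonempty (Fin N) := ⟨⟨0, by omega⟩⟩
  have := Measure.addHaar_ball (volume : Measure (EuclideanSpace ℝ (Fin N))) 0 hr
  simpa [VB] using this

theorem VB_one_pos : 0 < VB N 1 := measure_ball_pos _ _ one_pos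
theorem VB_ne_top (r : ℝ) : VB N r ≠ ⊤ := measure_ball_lt_top.ne

theorem VB_lt_iff (hN : 2 ≤ N) {r s : ℝ} (hr : 0 ≤ r) : VB N r < VB N s ↔ r < s := by
  constructor
  · intro h
    by_contra! h2
    exact absurd h (not_lt.2 (VB_mono h2))
  · intro h
    rw [VB_of_nonneg hN hr, VB_of_nonneg hN (hr.trans h.le)]
    apply ENNReal.mul_lt_mul_left VB_one_pos.ne' (VB_ne_top 1)
    rw [ENNReal.ofReal_lt_ofReal_iff (by have := hr.trans_lt h; positivity)]
    exact pow_lt_pow_left₀ h hr (by omega)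

theorem exists_rad (hN : 2 ≤ N) {m : ℝ≥0∞} (hm : m ≠ ⊤) : ∃ r : ℝ, 0 ≤ r ∧ VB N r = m := by
  set c : ℝ := (m / VB N 1).toReal with hc
  have c0 : 0 ≤ c := ENNReal.toReal_nonneg
  have hf : m / VB N 1 ≠ ⊤ := ENNReal.div_ne_top hm VB_one_pos.ne'
  refine ⟨c ^ (1 / (N : ℝ)), by positivity, ?_⟩
  rw [VB_of_nonneg hN (by positivity), ← rpow_natCast, ← rpow_mul c0, one_div_mul_cancel (by positivity),
    rpow_one, hc, ENNReal.ofReal_toReal hf]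
  exact ENNReal.div_mul_cancel VB_one_pos.ne' (VB_ne_top 1)

/-- decreasing rearrangement profile -/
noncomputable def prof (w : EuclideanSpace ℝ (Fin N) → ℝ) (r : ℝ) : ℝ :=
  sSup (insert 0 {t : ℝ | 0 < t ∧ VB N r < volume {x | t < w x}})

variable {w : EuclideanSpace ℝ (Fin N) → ℝ} {W R : ℝ} {L : ℝ≥0}

theorem prof_bdd (hW : ∀ x, w x ≤ W) (r : ℝ) :
    BddAbove (insert 0 {t : ℝ | 0 < t ∧ VB N r < volume {x | t < w x}}) := by
  refine BddAbove.insert _ ⟨W, ?_⟩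
  rintro t ⟨_, ht⟩
  by_contra! h
  have : {x | t < w x} = ∅ := by
    ext x; simp; linarith [hW x]
  rw [this] at ht
  simp at ht

theorem prof_nonneg (hW : ∀ x, w x ≤ W) (r : ℝ) : 0 ≤ prof w r :=
  le_csSup (prof_bdd hW r) (by simp)

theorem prof_lt_iff (hW : ∀ x, w x ≤ W) (r : ℝ) {t : ℝ} (ht : 0 ≤ t) :
    t < prof w r ↔ VB N r < volume {x | t < w x} := by
  constructor
  · intro h
    obtain ⟨s, hs, hts⟩ := exists_lt_of_lt_csSup ⟨0, by simp⟩ h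
    rcases hs with rfl | ⟨hs0, hs⟩
    · linarith
    · refine hs.trans_le (measure_mono fun x (hx : s < w x) => ?_)
      exact hts.trans hx
  · intro h
    have : {x | t < w x} = ⋃ n : ℕ, {x | t + 1 / ((n : ℝ) + 1) < w x} := by
      ext x
      simp only [mem_ofPred_eq, mem_iUnion]
      constructor
      · intro h
        obtain ⟨n, hn⟩ := exists_nat_one_div_lt (sub_pos.2 h)
        exact ⟨n, by linarith⟩
      · rintro ⟨n, hn⟩
        have : 0 < 1 / ((n : ℝ) + 1) := by positivity
        linarith
    rw [this, Monotone.measure_iUnion, lt_iSup_iff] at h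
    · obtain ⟨n, hn⟩ := h
      have hpos : 0 < 1 / ((n : ℝ) + 1) := by positivity
      have : t + 1 / ((n : ℝ) + 1) ≤ prof w r := by
        apply le_csSup (prof_bdd hW r)
        right
        exact ⟨by linarith, hn⟩
      linarith
    · intro a b hab x (hx : t + 1 / ((a : ℝ) + 1) < w x)
      have : 1 / ((b : ℝ) + 1) ≤ 1 / ((a : ℝ) + 1) := by
        have : (a : ℝ) ≤ b := by exact_mod_cast hab
        gcongr
      simp only [mem_ofPred_eq]
      linarith

theorem prof_anti (hW : ∀ x, w x ≤ W) : Antitone (prof w) := by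
  intro r s hrs
  by_contra! h
  have := (prof_lt_iff hW s (prof_nonneg hW r)).1 h
  have h2 := (prof_lt_iff hW r (prof_nonneg hW r)).2 ((VB_mono hrs).trans_lt this)
  exact lt_irrefl _ h2

theorem prof_neg (hW : ∀ x, w x ≤ W) {r : ℝ} (hr : r ≤ 0) : prof w r = prof w 0 := by
  have : VB N r = VB N 0 := by simp [VB, ball_eq_empty.2 hr]
  simp [prof, this]

theorem level_bdd (hR : ∀ x, R ≤ ‖x‖ → w x = 0) {t : ℝ} (ht : 0 ≤ t) :
    {x | t < w x} ⊆ ball 0 R := by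
  intro x hx
  simp only [mem_ofPred_eq] at hx
  by_contra h
  simp at h
  rw [hR x h] at hx
  linarith

theorem prof_lip (hN : 2 ≤ N) (hW : ∀ x, w x ≤ W) (hR : ∀ x, R ≤ ‖x‖ → w x = 0)
    (hw : LipschitzWith L w) : LipschitzWith L (prof w) := by
  have main : ∀ r h, 0 ≤ r → 0 < h → prof w r ≤ prof w (r + h) + L * h := by
    intro r h hr hh
    by_contra! hc
    set s := prof w (r + h) with hs
    have s0 : 0 ≤ s := prof_nonneg hW _
    have h1 := (prof_lt_iff hW r (by positivity)).1 hc
    have hb := level_bdd (w := w) hR (t := s + L * h) (by positivity)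
    obtain ⟨ρ, ρ0, hρ⟩ := exists_rad hN ((measure_mono (μ := volume) hb).trans_lt measure_ball_lt_top).ne
    rw [← hρ, VB_lt_iff hN hr] at h1
    have hopen : ∀ t, IsOpen {x | t < w x} := fun t => isOpen_lt continuous_const hw.continuous
    have h2 := bm_ball _ (hopen (s + L * h)) (isBounded_ball.subset hb) (hr.trans_lt h1) hh (hρ.le)
      {x | s < w x} (hopen s).measurableSet (isBounded_ball.subset (level_bdd hR s0)) (by
        intro x hx y hy
        simp only [mem_ofPred_eq, mem_ball, dist_zero_right] at *
        have := hw.le_add_mul x (x + y)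
        simp at this
        have : (L : ℝ) * ‖y‖ ≤ L * h := by gcongr
        linarith)
    have h3 : VB N (r + h) < volume {x | s < w x} :=
      lt_of_lt_of_le ((VB_lt_iff hN (by positivity)).2 (by linarith)) h2
    exact lt_irrefl _ ((prof_lt_iff hW (r + h) s0).2 h3)
  apply LipschitzWith.of_le_add_mul
  intro x y
  rcases le_or_gt y x with h | h
  · have := prof_anti hW h
    have : 0 ≤ L * dist x y := by positivity
    linarith
  rcases le_or_gt y 0 with hy | hy
  · rw [prof_neg hW hy, prof_neg hW (h.le.trans hy)]
    have : 0 ≤ L * dist x y := by positivity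
    linarith
  have h1 := main (max x 0) (y - max x 0) (by simp) (by simp [h, hy])
  have h2 : prof w (max x 0) = prof w x := by
    rcases le_total x 0 with h | h
    · rw [max_eq_right h, prof_neg hW h]
    · rw [max_eq_left h]
  rw [h2, add_sub_cancel] at h1
  refine h1.trans ?_
  rw [dist_comm, Real.dist_eq, abs_of_pos (by linarith)]
  gcongr
  simp

theorem prof_level (hN : 2 ≤ N) (hW : ∀ x, w x ≤ W) (hR : ∀ x, R ≤ ‖x‖ → w x = 0) {t : ℝ} (ht : 0 ≤ t) :
    volume {x : EuclideanSpace ℝ (Fin N) | t < prof w ‖x‖} = volume {x | t < w x} := by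
  have hb := level_bdd (w := w) hR ht
  obtain ⟨ρ, ρ0, hρ⟩ := exists_rad hN ((measure_mono (μ := volume) hb).trans_lt measure_ball_lt_top).ne
  have : {x : EuclideanSpace ℝ (Fin N) | t < prof w ‖x‖} = ball 0 ρ := by
    ext x
    simp only [mem_ofPred_eq, mem_ball, dist_zero_right]
    rw [prof_lt_iff hW _ ht, ← hρ, VB_lt_iff hN (norm_nonneg _)]
  rw [this, ← hρ, VB]

theorem prof_rpow (hN : 2 ≤ N) (hW : ∀ x, w x ≤ W) (hR : ∀ x, R ≤ ‖x‖ → w x = 0)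
    (hw : LipschitzWith L w) (w0 : ∀ x, 0 ≤ w x) {q : ℝ} (hq : 0 < q) :
    ∫⁻ x : EuclideanSpace ℝ (Fin N), ENNReal.ofReal (prof w ‖x‖ ^ q) = ∫⁻ x, ENNReal.ofReal (w x ^ q) := by
  have c1 := (prof_lip hN hW hR hw).continuous
  have c2 := hw.continuous
  rw [lintegral_rpow_eq_lintegral_meas_lt_mul _ (ae_of_all _ fun x => prof_nonneg hW _)
      (by fun_prop) hq,
    lintegral_rpow_eq_lintegral_meas_lt_mul _ (ae_of_all _ w0)
      (by fun_prop) hq]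
  congr 1
  apply setLIntegral_congr_fun measurableSet_Ioi
  intro t ht
  simp only
  rw [prof_level hN hW hR (le_of_lt ht)]

theorem prof_HL_level (hN : 2 ≤ N) (hW : ∀ x, w x ≤ W) (hR : ∀ x, R ≤ ‖x‖ → w x = 0)
    (hw : LipschitzWith L w) {p p' h : ℝ} (hp : p.HolderConjugate p')
    (hh : 0 < h) (h1 : h ≤ 1) {t : ℝ} (ht : 0 ≤ t) :
    volume {x : EuclideanSpace ℝ (Fin N) | t < HL (prof w) p' h ‖x‖} ≤ volume {x | t < HL w p' h x} := by
  obtain ⟨Vm, V0, hV⟩ := exists_Vm hp L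
  have hp0' : 0 < p' := hp.symm.pos
  have hW' : ∀ r, prof w r ≤ prof w 0 := by
    intro r
    rcases le_total r 0 with h | h
    · rw [prof_neg hW h]
    · exact prof_anti hW h
  have hopen : ∀ t, IsOpen {x | t < w x} := fun t => isOpen_lt continuous_const hw.continuous
  have hb : {x | t < HL w p' h x} ⊆ ball 0 (R + Vm) := by
    intro x hx
    by_contra hc
    simp only [mem_ball, dist_zero_right, not_lt] at hc
    have := HL_zero hp hh h1 hw V0 hV hR x hc
    simp only [mem_ofPred_eq] at hx
    linarith
  obtain ⟨σ, σ0, hσ⟩ := exists_rad hN ((measure_mono (μ := volume) hb).trans_lt measure_ball_lt_top).ne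
  rw [← hσ]
  apply measure_mono
  intro x hx
  simp only [mem_ofPred_eq, mem_ball, dist_zero_right] at *
  rw [HL_lt_iff hp hh hW'] at hx
  obtain ⟨s, hs⟩ := hx
  set c := h * (‖s‖ ^ p' / p') with hc
  have c0 : 0 ≤ c := by positivity
  have hs' : t + c < prof w (‖x‖ + h • s) := by linarith
  rw [prof_lt_iff hW _ (by positivity)] at hs'
  have hbb := level_bdd (w := w) hR (t := t + c) (by positivity)
  obtain ⟨ρ, ρ0, hρ⟩ := exists_rad hN ((measure_mono (μ := volume) hbb).trans_lt measure_ball_lt_top).ne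
  rw [← hρ] at hs'
  have h3 : ‖x‖ + h • s < ρ := by
    by_contra! h
    exact absurd hs' (not_lt.2 (VB_mono h))
  have ρpos : 0 < ρ := by
    rcases ρ0.eq_or_lt with h | h
    · rw [← h] at hs'
      simp [VB] at hs'
    · exact h
  have h4 : ‖x‖ < ρ + h * |s| := by
    rw [smul_eq_mul] at h3
    have := neg_abs_le s
    nlinarith
  refine h4.trans_le ?_
  by_contra! hcon
  have h5 := (VB_lt_iff hN σ0).2 hcon
  rw [hσ] at h5
  refine absurd h5 (not_lt.2 ?_)
  rcases eq_or_ne s 0 with rfl | hs0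
  · simp only [abs_zero, mul_zero, add_zero, hρ]
    refine measure_mono fun y (hy : t + c < w y) => ?_
    have := HL_ge_self hp hh hW y
    simp only [mem_ofPred_eq]
    linarith
  · have hs1 : 0 < |s| := abs_pos.2 hs0
    refine bm_ball _ (hopen (t + c)) (isBounded_ball.subset hbb) ρpos (by positivity) hρ.le
      _ (HL_open hp hh hW hw.continuous t).measurableSet (isBounded_ball.subset hb) ?_
    intro y hy z hz
    simp only [mem_ofPred_eq, mem_ball, dist_zero_right] at *
    rw [HL_lt_iff hp hh hW]
    refine ⟨-(h⁻¹ • z), ?_⟩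
    have e : y + z + h • -(h⁻¹ • z) = y := by
      rw [smul_neg, smul_smul, mul_inv_cancel₀ hh.ne', one_smul]; abel
    rw [e]
    have : h * (‖-(h⁻¹ • z)‖ ^ p' / p') ≤ c := by
      rw [hc]
      gcongr
      rw [norm_neg, norm_smul, norm_inv, norm_of_nonneg hh.le, inv_mul_le_iff₀ hh]
      exact hz.le
    linarith

theorem schwarz_energy (hN : 2 ≤ N) (hW : ∀ x, w x ≤ W) (hR : ∀ x, R ≤ ‖x‖ → w x = 0)
    (hw : LipschitzWith L w) (w0 : ∀ x, 0 ≤ w x) {p : ℝ} (hp1 : 1 < p) :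
    ∫⁻ x : EuclideanSpace ℝ (Fin N), ENNReal.ofReal (|deriv (prof w) ‖x‖| ^ p) ≤
      ∫⁻ x, ENNReal.ofReal (‖fderiv ℝ w x‖ ^ p) := by
  have hp := Real.HolderConjugate.conjExponent hp1
  set p' := p.conjExponent
  have hp0 : 0 < p := hp.pos
  obtain ⟨Vm, V0, hV⟩ := exists_Vm hp L
  have hW' : ∀ r, prof w r ≤ prof w 0 := by
    intro r
    rcases le_total r 0 with h | h
    · rw [prof_neg hW h]
    · exact prof_anti hW h
  have lφ := prof_lip hN hW hR hw
  have c1 := lφ.continuous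
  have c2 := hw.continuous
  let h : ℕ → ℝ := fun n => 1 / ((n : ℝ) + 1)
  have hh : ∀ n, 0 < h n := fun n => by simp only [h]; positivity
  have hh1 : ∀ n, h n ≤ 1 := fun n => by
    simp only [h]; rw [div_le_one (by positivity)]; simp
  let A : ℕ → EuclideanSpace ℝ (Fin N) → ℝ≥0∞ := fun n x =>
    ENNReal.ofReal ((HL (prof w) p' (h n) ‖x‖ - prof w ‖x‖) / h n)
  let B : ℕ → EuclideanSpace ℝ (Fin N) → ℝ≥0∞ := fun n x =>
    ENNReal.ofReal ((HL w p' (h n) x - w x) / h n)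
  have m1 : ∀ n, Measurable (HL (prof w) p' (h n)) := fun n => HL_meas hp (hh n) hW' c1
  have m2 : ∀ n, Measurable (HL w p' (h n)) := fun n => HL_meas hp (hh n) hW c2
  have mA : ∀ n, Measurable (A n) := fun n => by
    have := m1 n
    simp only [A]; fun_prop
  have mB : ∀ n, Measurable (B n) := fun n => by
    have := m2 n
    simp only [B]; fun_prop
  have zeroB : ∀ n x, R + Vm ≤ ‖x‖ → B n x = 0 := by
    intro n x hx
    have e1 := HL_zero hp (hh n) (hh1 n) hw V0 hV hR x hx
    have e2 := hR x (by linarith)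
    simp only [B]
    rw [ENNReal.ofReal_eq_zero, e2]
    apply div_nonpos_of_nonpos_of_nonneg _ (hh n).le
    linarith
  have boundB : ∀ n, B n ≤ (ball 0 (R + Vm)).indicator (fun _ => ENNReal.ofReal (L ^ p / p)) := by
    intro n x
    by_cases hx : x ∈ ball 0 (R + Vm)
    · rw [indicator_of_mem hx]
      apply ENNReal.ofReal_le_ofReal
      rw [div_le_iff₀ (hh n)]
      linarith [HL_le hp (hh n) hw x]
    · rw [zeroB n x (by simpa using hx)]; simp
  have finw : ∫⁻ x, ENNReal.ofReal (w x) ≠ ⊤ := by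
    have : (fun x => ENNReal.ofReal (w x)) ≤ (ball 0 R).indicator (fun _ => ENNReal.ofReal W) := by
      intro x
      by_cases hx : x ∈ ball 0 R
      · rw [indicator_of_mem hx]; exact ENNReal.ofReal_le_ofReal (hW x)
      · simp only; rw [hR x (by simpa using hx)]; simp
    refine ((lintegral_mono this).trans_lt ?_).ne
    rw [lintegral_indicator measurableSet_ball]
    simp [ENNReal.mul_lt_top, measure_ball_lt_top]
  have eqw : ∫⁻ x : EuclideanSpace ℝ (Fin N), ENNReal.ofReal (prof w ‖x‖) = ∫⁻ x, ENNReal.ofReal (w x) := by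
    have := prof_rpow hN hW hR hw w0 one_pos
    simpa using this
  have leHL : ∀ n, ∫⁻ x : EuclideanSpace ℝ (Fin N), ENNReal.ofReal (HL (prof w) p' (h n) ‖x‖) ≤
      ∫⁻ x, ENNReal.ofReal (HL w p' (h n) x) := by
    intro n
    rw [lintegral_eq_lintegral_meas_lt _ (ae_of_all _ fun x => (prof_nonneg hW _).trans (HL_ge_self hp (hh n) hW' _))
        ((m1 n).comp measurable_norm).aemeasurable,
      lintegral_eq_lintegral_meas_lt _ (ae_of_all _ fun x => (w0 x).trans (HL_ge_self hp (hh n) hW _))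
        (m2 n).aemeasurable]
    apply setLIntegral_mono' measurableSet_Ioi
    intro t ht
    exact prof_HL_level hN hW hR hw hp (hh n) (hh1 n) (le_of_lt ht)
  have AB : ∀ n, ∫⁻ x, A n x ≤ ∫⁻ x, B n x := by
    intro n
    have eA : ∀ x, A n x = (ENNReal.ofReal (h n))⁻¹ * (ENNReal.ofReal (HL (prof w) p' (h n) ‖x‖) - ENNReal.ofReal (prof w ‖x‖)) := by
      intro x
      simp only [A]
      rw [ENNReal.ofReal_div_of_pos (hh n), ENNReal.ofReal_sub _ (prof_nonneg hW _), ENNReal.div_eq_inv_mul]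
    have eB : ∀ x, B n x = (ENNReal.ofReal (h n))⁻¹ * (ENNReal.ofReal (HL w p' (h n) x) - ENNReal.ofReal (w x)) := by
      intro x
      simp only [B]
      rw [ENNReal.ofReal_div_of_pos (hh n), ENNReal.ofReal_sub _ (w0 _), ENNReal.div_eq_inv_mul]
    have hm1 := m1 n
    have hm2 := m2 n
    simp only [eA, eB]
    rw [lintegral_const_mul _ (by fun_prop), lintegral_const_mul _ (by fun_prop),
      lintegral_sub (by fun_prop) (by rw [eqw]; exact finw) (ae_of_all _ fun x => ENNReal.ofReal_le_ofReal (HL_ge_self hp (hh n) hW' _)),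
      lintegral_sub (by fun_prop) finw (ae_of_all _ fun x => ENNReal.ofReal_le_ofReal (HL_ge_self hp (hh n) hW _)), eqw]
    exact mul_le_mul' le_rfl (tsub_le_tsub_right (leHL n) _)
  have chain : ∫⁻ x : EuclideanSpace ℝ (Fin N), ENNReal.ofReal (|deriv (prof w) ‖x‖| ^ p / p) ≤
      ∫⁻ x, ENNReal.ofReal (‖fderiv ℝ w x‖ ^ p / p) := by
    calc ∫⁻ x : EuclideanSpace ℝ (Fin N), ENNReal.ofReal (|deriv (prof w) ‖x‖| ^ p / p)
        ≤ ∫⁻ x, Filter.liminf (fun n => A n x) Filter.atTop := lintegral_mono fun x => HL_liminf hp hW' ‖x‖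
      _ ≤ Filter.liminf (fun n => ∫⁻ x, A n x) Filter.atTop := lintegral_liminf_le mA
      _ ≤ Filter.liminf (fun n => ∫⁻ x, B n x) Filter.atTop := Filter.liminf_le_liminf (Filter.Eventually.of_forall AB)
      _ ≤ Filter.limsup (fun n => ∫⁻ x, B n x) Filter.atTop := Filter.liminf_le_limsup
      _ ≤ ∫⁻ x, Filter.limsup (fun n => B n x) Filter.atTop := by
          apply limsup_lintegral_le _ mB (fun n => ae_of_all _ (boundB n))
          rw [lintegral_indicator measurableSet_ball]
          simp [ENNReal.mul_eq_top, measure_ball_lt_top.ne]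
      _ ≤ _ := by
          apply lintegral_mono_ae
          filter_upwards [hw.ae_differentiableAt] with x hx
          exact HL_limsup hp hw hx
  have sc : ∀ k : EuclideanSpace ℝ (Fin N) → ℝ, ∫⁻ x, ENNReal.ofReal (k x / p) = (∫⁻ x, ENNReal.ofReal (k x)) * (ENNReal.ofReal p)⁻¹ := by
    intro k
    rw [← lintegral_mul_const' _ _ (by simp [hp0])]
    congr 1; ext x
    rw [ENNReal.ofReal_div_of_pos hp0, div_eq_mul_inv]
  rw [sc, sc] at chain
  exact (ENNReal.mul_le_mul_iff_left (ENNReal.inv_ne_zero.2 (by simp)) (ENNReal.inv_ne_top.2 (by simp [hp0]))).1 chain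

end Schwarz

section Flux
variable {N : ℕ}

theorem polar_lint (hN : 2 ≤ N) (G : EuclideanSpace ℝ (Fin N) → ℝ≥0∞) (hG : Measurable G) :
    ∫⁻ x, G x = ∫⁻ σ : sphere (0 : EuclideanSpace ℝ (Fin N)) 1,
      (∫⁻ r in Ioi (0:ℝ), ENNReal.ofReal (r ^ (N - 1)) * G (r • σ.1)) ∂(volume.toSphere) := by
  have hd : Module.finrank ℝ (EuclideanSpace ℝ (Fin N)) = N := by simp
  have h1 : ∫⁻ x, G x = ∫⁻ x : ({(0)}ᶜ : Set (EuclideanSpace ℝ (Fin N))), G x.1 ∂(volume.comap Subtype.val) := by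
    have : Nontrivial (EuclideanSpace ℝ (Fin N)) := by
      have : 0 < Module.finrank ℝ (EuclideanSpace ℝ (Fin N)) := by omega
      exact Module.nontrivial_of_finrank_pos this
    rw [lintegral_subtype_comap (measurableSet_singleton _).compl, restrict_compl_singleton]
  have h2 := (volume : Measure (EuclideanSpace ℝ (Fin N))).measurePreserving_homeomorphUnitSphereProd.lintegral_comp_emb
        (Homeomorph.measurableEmbedding _) (fun z => G (z.2.1 • z.1.1))
  have h3 : ∀ x : ({(0)}ᶜ : Set (EuclideanSpace ℝ (Fin N))),
      ((homeomorphUnitSphereProd _ x).2.1 • (homeomorphUnitSphereProd _ x).1.1) = x.1 := by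
    intro x
    have : ‖x.1‖ ≠ 0 := norm_ne_zero_iff.2 x.2
    simp [smul_smul, this]
  rw [h1]
  simp only [h3] at h2
  rw [h2, lintegral_prod _ (by fun_prop)]
  congr 1
  ext σ
  rw [Measure.volumeIoiPow, lintegral_withDensity_eq_lintegral_mul _ (by fun_prop) (by fun_prop), hd]
  simp only [Pi.mul_apply]
  exact lintegral_subtype_comap measurableSet_Ioi (fun r : ℝ => ENNReal.ofReal (r ^ (N - 1)) * G (r • σ.1))

theorem flux_star (hN : 2 ≤ N) (S : Set (EuclideanSpace ℝ (Fin N))) (hS : MeasurableSet S)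
    (bS : Bornology.IsBounded S)
    (star : ∀ x ∈ S, ∀ t : ℝ, 0 < t → t ≤ 1 → t • x ∈ S) (f g : ℝ → ℝ≥0∞) (hf : Measurable f)
    (hg : Measurable g)
    (H : ∀ r, 0 ≤ r → ∫⁻ s in Ioo 0 r, ENNReal.ofReal (s ^ (N - 1)) * f s ≤
      ∫⁻ s in Ioo 0 r, ENNReal.ofReal (s ^ (N - 1)) * g s) :
    ∫⁻ x in S, f ‖x‖ ≤ ∫⁻ x in S, g ‖x‖ := by
  have key : ∀ σ : sphere (0 : EuclideanSpace ℝ (Fin N)) 1, ∃ r, 0 ≤ r ∧ ∀ f : ℝ → ℝ≥0∞, Measurable f →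
      ∫⁻ s in Ioi (0:ℝ), ENNReal.ofReal (s ^ (N - 1)) * (S.indicator (fun x => f ‖x‖) (s • σ.1)) =
      ∫⁻ s in Ioo 0 r, ENNReal.ofReal (s ^ (N - 1)) * f s := by
    intro σ
    set A : Set ℝ := {s | 0 < s ∧ s • σ.1 ∈ S} with hA
    have hσ : ‖σ.1‖ = 1 := by simp
    have hAm : MeasurableSet A := by
      apply MeasurableSet.inter measurableSet_Ioi
      exact (by fun_prop : Measurable fun s : ℝ => s • σ.1) hS
    have bA : BddAbove A := by
      obtain ⟨R, hR⟩ := bS.subset_closedBall 0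
      refine ⟨R, ?_⟩
      rintro s ⟨s0, hs⟩
      have := hR hs
      simpa [norm_smul, hσ, abs_of_pos s0] using this
    refine ⟨sSup A, Real.sSup_nonneg fun s hs => hs.1.le, fun f hf => ?_⟩
    have e1 : Ioo 0 (sSup A) ⊆ A := by
      intro s hs
      have hne : A.Nonempty := by
        by_contra h
        rw [not_nonempty_iff_eq_empty] at h
        rw [h] at hs; simp at hs
      obtain ⟨t, ht, hst⟩ := exists_lt_of_lt_csSup hne hs.2
      refine ⟨hs.1, ?_⟩
      have := star _ ht.2 (s / t) (div_pos hs.1 ht.1) ((div_le_one ht.1).2 hst.le)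
      rwa [smul_smul, div_mul_cancel₀ _ ht.1.ne'] at this
    have e2 : A ⊆ Ioc 0 (sSup A) := fun s hs => ⟨hs.1, le_csSup bA hs⟩
    have e3 : Ioo 0 (sSup A) =ᵐ[volume] A := by
      have := Ioo_ae_eq_Ioc (μ := (volume : Measure ℝ)) (a := 0) (b := sSup A)
      exact Filter.EventuallyLE.antisymm (LE.le.eventuallyLE e1)
        ((LE.le.eventuallyLE e2).trans this.symm.le)
    rw [setLIntegral_congr e3, ← lintegral_indicator hAm, ← lintegral_indicator measurableSet_Ioi]
    congr 1
    ext s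
    by_cases h0 : 0 < s
    · by_cases hs : s • σ.1 ∈ S
      · have : s ∈ A := ⟨h0, hs⟩
        simp [this, h0, hs, norm_smul, hσ, abs_of_pos h0]
      · have : s ∉ A := fun h => hs h.2
        simp [this, hs]
    · have : s ∉ A := fun h => h0 h.1
      simp [this, h0]
  rw [← lintegral_indicator hS, ← lintegral_indicator hS, polar_lint hN _ ((by fun_prop : Measurable _).indicator hS),
    polar_lint hN _ ((by fun_prop : Measurable _).indicator hS)]
  apply lintegral_mono
  intro σ
  obtain ⟨r, r0, hr⟩ := key σ
  simp only
  rw [hr f hf, hr g hg]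
  exact H r r0

end Flux

section Radial
variable {N : ℕ} {φ : ℝ → ℝ} {L : ℝ≥0}

theorem eInt (hφ : LipschitzWith L φ) (p : ℝ) (hp : 0 < p) (n : ℕ) (a b : ℝ) :
    IntervalIntegrable (fun s => s ^ n * |deriv φ s| ^ p) volume a b := by
  have hm : Measurable (fun s => |deriv φ s| ^ p) := ((measurable_deriv φ).norm).pow_const p
  have h1 : IntervalIntegrable (fun s => |deriv φ s| ^ p) volume a b := by
    rw [intervalIntegrable_iff]
    refine Measure.integrableOn_of_bounded (M := (L:ℝ) ^ p) (by simp) hm.aestronglyMeasurable ?_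
    refine ae_of_all _ fun s => ?_
    rw [Real.norm_of_nonneg (by positivity)]
    exact Real.rpow_le_rpow (abs_nonneg _) (norm_deriv_le_of_lipschitz hφ) hp.le
  exact h1.continuousOn_mul (by fun_prop)

theorem lint_Ioo {F : ℝ → ℝ} (hF : ∀ s, 0 ≤ F s) (n : ℕ) {r : ℝ} (hr : 0 ≤ r)
    (hi : IntervalIntegrable (fun s => s ^ n * F s) volume 0 r) :
    ∫⁻ s in Ioo 0 r, ENNReal.ofReal (s ^ n) * ENNReal.ofReal (F s) = ENNReal.ofReal (∫ s in 0..r, s ^ n * F s) := by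
  rw [intervalIntegral.integral_of_le hr,
    integral_Ioc_eq_integral_Ioo, ofReal_integral_eq_lintegral_ofReal]
  · apply setLIntegral_congr_fun measurableSet_Ioo
    intro s hs
    simp only
    rw [ENNReal.ofReal_mul (pow_nonneg hs.1.le _)]
  · exact ((intervalIntegrable_iff_integrableOn_Ioo_of_le hr).1 hi)
  · filter_upwards [ae_restrict_mem measurableSet_Ioo] with s hs
    exact mul_nonneg (pow_nonneg hs.1.le _) (hF s)

theorem polar_rad (hN : 2 ≤ N) (f : ℝ → ℝ≥0∞) (hf : Measurable f) {ρ : ℝ} (ρ0 : 0 ≤ ρ) (hz : ∀ s, ρ < s → f s = 0) :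
    ∫⁻ x : EuclideanSpace ℝ (Fin N), f ‖x‖ = (volume : Measure (EuclideanSpace ℝ (Fin N))).toSphere univ *
      ∫⁻ s in Ioo 0 ρ, ENNReal.ofReal (s ^ (N - 1)) * f s := by
  rw [polar_lint hN _ (by fun_prop)]
  have : ∀ σ : sphere (0 : EuclideanSpace ℝ (Fin N)) 1,
      ∫⁻ r in Ioi (0:ℝ), ENNReal.ofReal (r ^ (N - 1)) * f ‖r • σ.1‖ = ∫⁻ s in Ioo 0 ρ, ENNReal.ofReal (s ^ (N - 1)) * f s := by
    intro σ
    have hσ : ‖σ.1‖ = 1 := by simp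
    rw [← Ioc_union_Ioi_eq_Ioi ρ0, lintegral_union measurableSet_Ioi (Ioc_disjoint_Ioi le_rfl),
      setLIntegral_congr Ioo_ae_eq_Ioc.symm]
    have h2 : ∫⁻ r in Ioi ρ, ENNReal.ofReal (r ^ (N - 1)) * f ‖r • σ.1‖ = 0 := by
      rw [setLIntegral_congr_fun (g := fun _ => 0) measurableSet_Ioi]
      · simp
      · intro r hr
        simp only
        rw [norm_smul, hσ, mul_one, Real.norm_of_nonneg (ρ0.trans (le_of_lt hr)), hz r hr, mul_zero]
    rw [h2, add_zero]
    apply setLIntegral_congr_fun measurableSet_Ioo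
    intro r hr
    simp only
    rw [norm_smul, hσ, mul_one, Real.norm_of_nonneg hr.1.le]
  simp only [this, lintegral_const]
  rw [mul_comm]

theorem radial_profile (hN : 2 ≤ N) (hφ : LipschitzWith L φ) (anti : Antitone φ) (nn : ∀ r, 0 ≤ φ r)
    {ρ : ℝ} (ρ0 : 0 < ρ) (hz : ∀ r, ρ ≤ r → φ r = 0) {p q m : ℝ} (hp : 1 < p) (hq : 0 < q) (hm : 0 < m)
    (hlt : ∫⁻ x : EuclideanSpace ℝ (Fin N), ENNReal.ofReal (|deriv φ ‖x‖| ^ p) <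
      ENNReal.ofReal m * ∫⁻ x : EuclideanSpace ℝ (Fin N), ENNReal.ofReal (φ ‖x‖ ^ q)) :
    ∃ ψ : ℝ → ℝ, LipschitzWith L ψ ∧ (∀ r, 0 ≤ ψ r) ∧ (∀ r, ρ ≤ r → ψ r = 0) ∧ (∀ r, ψ r ≤ φ r) ∧ 0 < ψ 0 ∧
      ∀ r, 0 ≤ r → ∫⁻ s in Ioo 0 r, ENNReal.ofReal (s ^ (N - 1)) * ENNReal.ofReal (|deriv ψ s| ^ p) ≤
        ∫⁻ s in Ioo 0 r, ENNReal.ofReal (s ^ (N - 1)) * ENNReal.ofReal (m * ψ s ^ q) := by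
  have hc := hφ.continuous
  have ei := eInt hφ p (by linarith) (N - 1)
  have ck : Continuous (fun s => s ^ (N - 1) * (m * φ s ^ q)) := by
    have : Continuous (fun s => φ s ^ q) := hc.rpow_const fun _ => Or.inr hq.le
    fun_prop
  have ki : ∀ a b, IntervalIntegrable (fun s => s ^ (N - 1) * (m * φ s ^ q)) volume a b := fun a b => ck.intervalIntegrable a b
  have knn : ∀ s, 0 ≤ m * φ s ^ q := fun s => mul_nonneg hm.le (Real.rpow_nonneg (nn s) _)
  have dz : ∀ r, φ r = 0 → ∀ s, r < s → deriv φ s = 0 := by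
    intro r hr s hs
    have : φ =ᶠ[nhds s] fun _ => 0 := by
      filter_upwards [lt_mem_nhds hs] with t ht
      exact le_antisymm (hr ▸ anti ht.le) (nn t)
    rw [this.deriv_eq]; simp
  have zz : ∀ r, φ r = 0 → ∀ s, r ≤ s → φ s = 0 := fun r hr s hs => le_antisymm (hr ▸ anti hs) (nn s)
  set g : ℝ → ℝ := fun s => s ^ (N - 1) * |deriv φ s| ^ p - s ^ (N - 1) * (m * φ s ^ q) with hg
  have gi : ∀ a b, IntervalIntegrable g volume a b := fun a b => (ei a b).sub (ki a b)
  set Ψ : ℝ → ℝ := fun r => ∫ s in 0..r, g s with hΨ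
  have cΨ : Continuous Ψ := intervalIntegral.continuous_primitive gi 0
  have gz : ∀ r, φ r = 0 → ∀ b, r ≤ b → ∫ s in r..b, g s = 0 := by
    intro r hr b hb
    rw [intervalIntegral.integral_of_le hb, setIntegral_congr_fun (g := fun _ => 0) measurableSet_Ioc]
    · simp
    · intro s hs
      simp [hg, dz r hr s hs.1, zz r hr s hs.1.le, Real.zero_rpow hq.ne', Real.zero_rpow (by linarith : p ≠ 0)]
  have neg : Ψ ρ < 0 := by
    have e1 := polar_rad hN (fun s => ENNReal.ofReal (|deriv φ s| ^ p))
      (((measurable_deriv φ).norm).pow_const p).ennreal_ofReal ρ0.le (by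
        intro s hs
        simp [dz ρ (hz ρ le_rfl) s hs, Real.zero_rpow (by linarith : p ≠ 0)])
    have e2 := polar_rad hN (fun s => ENNReal.ofReal (m * φ s ^ q))
      ((continuous_const.mul (hc.rpow_const fun _ => Or.inr hq.le)).measurable).ennreal_ofReal ρ0.le (by
        intro s hs
        simp [hz s hs.le, Real.zero_rpow hq.ne'])
    have e3 : ENNReal.ofReal m * ∫⁻ x : EuclideanSpace ℝ (Fin N), ENNReal.ofReal (φ ‖x‖ ^ q) =
        ∫⁻ x : EuclideanSpace ℝ (Fin N), ENNReal.ofReal (m * φ ‖x‖ ^ q) := by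
      rw [← lintegral_const_mul' _ _ ENNReal.ofReal_ne_top]
      simp only [ENNReal.ofReal_mul hm.le]
    rw [e3, e1, e2, lint_Ioo (fun s => by positivity) _ ρ0.le (ei _ _), lint_Ioo knn _ ρ0.le (ki _ _)] at hlt
    by_contra! hge
    rw [hΨ] at hge
    simp only [hg] at hge
    rw [intervalIntegral.integral_sub (ei _ _) (ki _ _)] at hge
    refine absurd hlt (not_lt.2 ?_)
    exact mul_le_mul' le_rfl (ENNReal.ofReal_le_ofReal (by linarith))
  obtain ⟨r0, hr0, hmax⟩ := isCompact_Icc.exists_isMaxOn (s := Icc 0 ρ) ⟨0, by simp [ρ0.le]⟩ cΨ.continuousOn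
  have mx : ∀ r, 0 ≤ r → Ψ r ≤ Ψ r0 := by
    intro r hr
    rcases le_total r ρ with h | h
    · exact hmax ⟨hr, h⟩
    · have : Ψ r = Ψ ρ := by
        simp only [hΨ]
        rw [← intervalIntegral.integral_add_adjacent_intervals (gi 0 ρ) (gi ρ r), gz ρ (hz ρ le_rfl) r h, add_zero]
      rw [this]; exact hmax ⟨ρ0.le, le_rfl⟩
  have z0 : 0 ≤ Ψ r0 := by
    have := mx 0 le_rfl
    simpa [hΨ] using this
  have pos : 0 < φ r0 := by
    rcases (nn r0).lt_or_eq with h | h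
    · exact h
    exfalso
    have : Ψ ρ = Ψ r0 := by
      simp only [hΨ]
      rw [← intervalIntegral.integral_add_adjacent_intervals (gi 0 r0) (gi r0 ρ), gz r0 h.symm ρ hr0.2, add_zero]
    linarith
  have r0ρ : r0 ≤ ρ := hr0.2
  set ψ : ℝ → ℝ := fun r => φ (max r r0) with hψ
  have ψlip : LipschitzWith L ψ := by
    have := hφ.comp (LipschitzWith.id.max_const r0)
    simpa [hψ, Function.comp_def] using this
  have d1 : ∀ s, s < r0 → deriv ψ s = 0 := by
    intro s hs
    have : ψ =ᶠ[nhds s] fun _ => φ r0 := by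
      filter_upwards [gt_mem_nhds hs] with t ht
      simp [hψ, max_eq_right ht.le]
    rw [this.deriv_eq]; simp
  have d2 : ∀ s, r0 < s → deriv ψ s = deriv φ s := by
    intro s hs
    have : ψ =ᶠ[nhds s] φ := by
      filter_upwards [lt_mem_nhds hs] with t ht
      simp [hψ, max_eq_left ht.le]
    rw [this.deriv_eq]
  have ψnn : ∀ r, 0 ≤ ψ r := fun r => nn _
  have ei' := eInt ψlip p (by linarith) (N - 1)
  have ki' : ∀ a b, IntervalIntegrable (fun s => s ^ (N - 1) * (m * ψ s ^ q)) volume a b := by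
    intro a b
    have : Continuous (fun s => ψ s ^ q) := ψlip.continuous.rpow_const fun _ => Or.inr hq.le
    apply Continuous.intervalIntegrable
    fun_prop
  have kn' : ∀ s, 0 ≤ m * ψ s ^ q := fun s => mul_nonneg hm.le (Real.rpow_nonneg (ψnn s) _)
  refine ⟨ψ, ψlip, ψnn, fun r hr => hz _ (hr.trans (le_max_left _ _)), fun r => anti (le_max_left _ _), ?_, ?_⟩
  · simpa [hψ, hr0.1] using pos
  intro r hr
  have flat : ∀ b, 0 ≤ b → b ≤ r0 → ∫ s in 0..b, s ^ (N - 1) * |deriv ψ s| ^ p = 0 := by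
    intro b hb hb'
    rw [intervalIntegral.integral_of_le hb, integral_Ioc_eq_integral_Ioo, setIntegral_congr_fun (g := fun _ => 0) measurableSet_Ioo]
    · simp
    · intro s hs
      simp [d1 s (hs.2.trans_le hb'), Real.zero_rpow (by linarith : p ≠ 0)]
  rw [lint_Ioo (fun s => by positivity) _ hr (ei' _ _), lint_Ioo kn' _ hr (ki' _ _)]
  apply ENNReal.ofReal_le_ofReal
  rcases le_total r r0 with h | h
  · rw [flat r hr h]
    apply intervalIntegral.integral_nonneg hr
    intro s hs
    exact mul_nonneg (pow_nonneg hs.1 _) (kn' s)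
  · rw [← intervalIntegral.integral_add_adjacent_intervals (ei' 0 r0) (ei' r0 r),
      ← intervalIntegral.integral_add_adjacent_intervals (ki' 0 r0) (ki' r0 r), flat r0 hr0.1 le_rfl, zero_add]
    have a1 : ∫ s in r0..r, s ^ (N - 1) * |deriv ψ s| ^ p = ∫ s in r0..r, s ^ (N - 1) * |deriv φ s| ^ p := by
      rw [intervalIntegral.integral_of_le h, intervalIntegral.integral_of_le h]
      apply setIntegral_congr_fun measurableSet_Ioc
      intro s hs
      simp only [d2 s hs.1]
    have a2 : ∫ s in r0..r, s ^ (N - 1) * (m * ψ s ^ q) = ∫ s in r0..r, s ^ (N - 1) * (m * φ s ^ q) := by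
      rw [intervalIntegral.integral_of_le h, intervalIntegral.integral_of_le h]
      apply setIntegral_congr_fun measurableSet_Ioc
      intro s hs
      simp only [hψ, max_eq_left hs.1.le]
    have a3 : 0 ≤ ∫ s in 0..r0, s ^ (N - 1) * (m * ψ s ^ q) := by
      apply intervalIntegral.integral_nonneg hr0.1
      intro s hs
      exact mul_nonneg (pow_nonneg hs.1 _) (kn' s)
    have a4 := mx r hr
    simp only [hΨ] at a4
    rw [← intervalIntegral.integral_add_adjacent_intervals (gi 0 r0) (gi r0 r)] at a4
    have a5 : ∫ s in r0..r, g s = (∫ s in r0..r, s ^ (N - 1) * |deriv φ s| ^ p) - ∫ s in r0..r, s ^ (N - 1) * (m * φ s ^ q) :=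
      intervalIntegral.integral_sub (ei _ _) (ki _ _)
    rw [a1, a2]
    linarith

end Radial

section Test
variable {N : ℕ} {ψ : ℝ → ℝ} {L : ℝ≥0} {Ω : Set (EuclideanSpace ℝ (Fin N))}

theorem rayleighQuot_nonneg (p q : ℝ) (v : EuclideanSpace ℝ (Fin N) → ℝ) : 0 ≤ rayleighQuot p q Ω v := by
  unfold rayleighQuot
  apply div_nonneg
  · exact integral_nonneg fun x => by positivity
  · apply Real.rpow_nonneg
    exact integral_nonneg fun x => by positivity

theorem muPQ_le {p q : ℝ} {v : EuclideanSpace ℝ (Fin N) → ℝ} {K : ℝ≥0} (hK : LipschitzOnWith K v (closure Ω))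
    (hne : ∃ x ∈ Ω, v x ≠ 0) (hc : (∫ x in Ω, |v x| ^ (q - 2) * v x) = 0) : muPQ p q Ω ≤ rayleighQuot p q Ω v := by
  unfold muPQ
  apply csInf_le
  · refine ⟨0, ?_⟩
    rintro R ⟨v, K, -, -, -, rfl⟩
    exact rayleighQuot_nonneg p q v
  · exact ⟨v, K, hK, hne, hc, rfl⟩

theorem intOn_cont (hb : Bornology.IsBounded Ω) {h : EuclideanSpace ℝ (Fin N) → ℝ} (hc : ContinuousOn h (closure Ω)) :
    IntegrableOn h Ω :=
  (hc.integrableOn_compact (hb.isCompact_closure)).mono_set subset_closure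

theorem int_pos (ho : IsOpen Ω) (hb : Bornology.IsBounded Ω) {h : EuclideanSpace ℝ (Fin N) → ℝ}
    (hc : ContinuousOn h (closure Ω)) (nn : ∀ x ∈ Ω, 0 ≤ h x) (hx : ∃ x ∈ Ω, 0 < h x) : 0 < ∫ x in Ω, h x := by
  rw [setIntegral_pos_iff_support_of_nonneg_ae]
  · obtain ⟨x, hxΩ, hx⟩ := hx
    have : {y | 0 < h y} ∩ Ω ∈ nhds x := by
      have h1 : ContinuousAt h x := hc.continuousAt (Filter.mem_of_superset (ho.mem_nhds hxΩ) subset_closure)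
      exact Filter.inter_mem (h1.eventually (lt_mem_nhds hx)) (ho.mem_nhds hxΩ)
    refine (Measure.measure_pos_of_mem_nhds volume this).trans_le (measure_mono ?_)
    rintro y ⟨hy, hy'⟩
    exact ⟨(ne_of_gt hy : h y ≠ 0), hy'⟩
  · filter_upwards [ae_restrict_mem ho.measurableSet] with x hx using nn x hx
  · exact intOn_cont hb hc

theorem fderiv_radial (x0 x : EuclideanSpace ℝ (Fin N)) (hx : x ≠ x0) :
    ‖fderiv ℝ (fun y => ψ ‖y - x0‖) x‖ ≤ |deriv ψ ‖x - x0‖| := by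
  by_cases hd : DifferentiableAt ℝ (fun y => ψ ‖y - x0‖) x
  swap
  · rw [fderiv_zero_of_not_differentiableAt hd]; simp
  have n0 : x - x0 ≠ 0 := sub_ne_zero.2 hx
  have n1 : 0 < ‖x - x0‖ := norm_pos_iff.2 n0
  have dψ : DifferentiableAt ℝ ψ ‖x - x0‖ := by
    set e := (‖x - x0‖)⁻¹ • (x - x0) with he
    have e1 : ‖e‖ = 1 := by rw [he, norm_smul]; simp [n1.ne']
    have ex : x0 + ‖x - x0‖ • e = x := by rw [he, smul_smul]; simp [n1.ne']
    have h1 : DifferentiableAt ℝ (fun r : ℝ => ψ ‖(x0 + r • e) - x0‖) ‖x - x0‖ := by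
      have h2 : DifferentiableAt ℝ (fun y => ψ ‖y - x0‖) (x0 + ‖x - x0‖ • e) := by rwa [ex]
      exact h2.comp (‖x - x0‖) (f := fun r : ℝ => x0 + r • e) (by fun_prop)
    refine h1.congr_of_eventuallyEq ?_
    filter_upwards [lt_mem_nhds n1] with r hr
    simp [norm_smul, e1, abs_of_pos hr]
  have dn : DifferentiableAt ℝ (fun y : EuclideanSpace ℝ (Fin N) => ‖y - x0‖) x :=
    (by fun_prop : DifferentiableAt ℝ (fun y : EuclideanSpace ℝ (Fin N) => y - x0) x).norm ℝ n0
  have := (dψ.hasDerivAt.comp_hasFDerivAt x dn.hasFDerivAt).fderiv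
  have e : fderiv ℝ (fun y => ψ ‖y - x0‖) x = deriv ψ ‖x - x0‖ • fderiv ℝ (fun y => ‖y - x0‖) x := this
  rw [e, norm_smul]
  have hl : LipschitzWith 1 (fun y : EuclideanSpace ℝ (Fin N) => ‖y - x0‖) := by
    apply LipschitzWith.of_dist_le_mul
    intro y z
    have := abs_norm_sub_norm_le (y - x0) (z - x0)
    simpa [Real.dist_eq, dist_eq_norm] using this
  have h1 := norm_fderiv_le_of_lipschitz ℝ hl (x₀ := x)
  calc _ ≤ ‖deriv ψ ‖x - x0‖‖ * 1 := by gcongr; simpa using h1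
    _ = _ := by simp

theorem shift_lint (x0 : EuclideanSpace ℝ (Fin N)) (hm : MeasurableSet Ω) (F : EuclideanSpace ℝ (Fin N) → ℝ≥0∞) :
    ∫⁻ x in Ω, F (x - x0) = ∫⁻ y in {y | y + x0 ∈ Ω}, F y := by
  have h2 : MeasurableSet {y | y + x0 ∈ Ω} := (measurable_add_const x0) hm
  rw [← lintegral_indicator hm, ← lintegral_indicator h2,
    ← lintegral_sub_right_eq_self ({y | y + x0 ∈ Ω}.indicator F) x0]
  congr 1
  ext x
  by_cases h : x ∈ Ω <;> simp [indicator, h]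

theorem exists_diam (hb : Bornology.IsBounded Ω) (hne : Ω.Nonempty) :
    ∃ x0 ∈ closure Ω, ∃ x1 ∈ closure Ω, dist x0 x1 = diam Ω := by
  have hc := hb.isCompact_closure
  obtain ⟨⟨x0, x1⟩, hx, hm⟩ := (hc.prod hc).exists_isMaxOn (hne.closure.prod hne.closure)
    (f := fun z => dist z.1 z.2) continuous_dist.continuousOn
  refine ⟨x0, hx.1, x1, hx.2, le_antisymm ?_ ?_⟩
  · rw [← diam_closure]
    exact dist_le_diam_of_mem hc.isBounded hx.1 hx.2
  · apply diam_le_of_forall_dist_le dist_nonneg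
    intro y hy z hz
    have h3 : (y, z) ∈ closure Ω ×ˢ closure Ω := mk_mem_prod (subset_closure hy) (subset_closure hz)
    have h4 := isMaxOn_iff.1 hm (y, z) h3
    simp only at h4
    exact h4

theorem dist_lt_diam_of_open (ho : IsOpen Ω) (hb : Bornology.IsBounded Ω) {y z : EuclideanSpace ℝ (Fin N)}
    (hy : y ∈ Ω) (hz : z ∈ Ω) (hne : y ≠ z) : dist y z < diam Ω := by
  have hc : Filter.Tendsto (fun t : ℝ => z + t • (z - y)) (nhdsWithin 0 (Ioi 0)) (nhds z) := by
    have : Continuous (fun t : ℝ => z + t • (z - y)) := by fun_prop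
    have := (this.tendsto 0).mono_left (nhdsWithin_le_nhds (s := Ioi 0))
    simpa using this
  obtain ⟨t, ht, t0⟩ := ((hc.eventually (ho.mem_nhds hz)).and self_mem_nhdsWithin).exists
  have t0 : 0 < t := t0
  have h1 := dist_le_diam_of_mem hb hy ht
  have h2 : dist y (z + t • (z - y)) = (1 + t) * dist y z := by
    rw [dist_comm, dist_eq_norm, dist_comm y z, dist_eq_norm]
    have : z + t • (z - y) - y = (1 + t) • (z - y) := by module
    rw [this, norm_smul, Real.norm_of_nonneg (by linarith)]
  have h3 : 0 < dist y z := dist_pos.2 hne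
  nlinarith

theorem holder_two {M0 M1 a b t : ℝ} (h0 : 0 < M0) (h1 : 0 < M1) (hM : M0 + M1 ≤ 1) (ha : 0 ≤ a) (hb : 0 ≤ b)
    (t0 : 0 < t) (t1 : t ≤ 1) : a ^ t * M0 + b ^ t * M1 ≤ (a * M0 + b * M1) ^ t := by
  set T := M0 + M1 with hT
  have T0 : 0 < T := by positivity
  have q0 : 0 ≤ M0 / T := by positivity
  have q1 : 0 ≤ M1 / T := by positivity
  have := (Real.concaveOn_rpow t0.le t1).2 (mem_Ici.2 ha) (mem_Ici.2 hb) q0 q1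
    (by field_simp; exact hT.symm)
  simp only [smul_eq_mul] at this
  have e1 : M0 / T * a ^ t + M1 / T * b ^ t = (a ^ t * M0 + b ^ t * M1) / T := by ring
  have e2 : M0 / T * a + M1 / T * b = (a * M0 + b * M1) / T := by ring
  rw [e1, e2, Real.div_rpow (by positivity) T0.le, div_le_div_iff₀ T0 (by positivity)] at this
  have h3 : T ≤ T ^ t := by
    conv_lhs => rw [← Real.rpow_one T]
    exact Real.rpow_le_rpow_of_exponent_ge T0 hM t1
  have h4 : 0 < T ^ t := by positivity
  have h5 : 0 ≤ (a * M0 + b * M1) ^ t := by positivity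
  have : (a ^ t * M0 + b ^ t * M1) * T ^ t ≤ (a * M0 + b * M1) ^ t * T ^ t :=
    this.trans (mul_le_mul_of_nonneg_left h3 h5)
  exact le_of_mul_le_mul_right this h4

end Test

section Test
variable {N : ℕ} {ψ : ℝ → ℝ} {L : ℝ≥0} {Ω : Set (EuclideanSpace ℝ (Fin N))}

theorem star_shift (ho : IsOpen Ω) (hcv : Convex ℝ Ω) {x0 : EuclideanSpace ℝ (Fin N)} (hx0 : x0 ∈ closure Ω) :
    ∀ y ∈ {y | y + x0 ∈ Ω}, ∀ t : ℝ, 0 < t → t ≤ 1 → t • y ∈ {y | y + x0 ∈ Ω} := by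
  intro y hy t t0 t1
  simp only [mem_ofPred_eq] at *
  have := hcv.combo_closure_interior_mem_interior hx0 (by rwa [ho.interior_eq]) (by linarith : 0 ≤ 1 - t) t0 (by ring)
    (y := y + x0)
  rw [ho.interior_eq] at this
  convert this using 1
  module

theorem energy_shift (hN : 2 ≤ N) (ho : IsOpen Ω) (hb : Bornology.IsBounded Ω) (hcv : Convex ℝ Ω)
    (hψ : LipschitzWith L ψ) (nn : ∀ r, 0 ≤ ψ r) {p q m : ℝ} (hp : 1 < p) (hq : 0 < q) (hm : 0 < m)
    (H : ∀ r, 0 ≤ r → ∫⁻ s in Ioo 0 r, ENNReal.ofReal (s ^ (N - 1)) * ENNReal.ofReal (|deriv ψ s| ^ p) ≤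
        ∫⁻ s in Ioo 0 r, ENNReal.ofReal (s ^ (N - 1)) * ENNReal.ofReal (m * ψ s ^ q))
    {x0 : EuclideanSpace ℝ (Fin N)} (hx0 : x0 ∈ closure Ω) :
    IntegrableOn (fun x => |deriv ψ ‖x - x0‖| ^ p) Ω ∧
    ∫ x in Ω, |deriv ψ ‖x - x0‖| ^ p ≤ m * ∫ x in Ω, ψ ‖x - x0‖ ^ q := by
  have m1 : Measurable (fun s => |deriv ψ s| ^ p) := ((measurable_deriv ψ).norm).pow_const p
  have c2 : Continuous (fun s => m * ψ s ^ q) := continuous_const.mul (hψ.continuous.rpow_const fun _ => Or.inr hq.le)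
  have bS : Bornology.IsBounded {y | y + x0 ∈ Ω} := by
    obtain ⟨R, hR⟩ := hb.subset_closedBall x0
    refine (isBounded_closedBall (x := (0 : EuclideanSpace ℝ (Fin N))) (r := R)).subset fun y hy => ?_
    have := hR hy
    simpa [dist_eq_norm] using this
  have key := flux_star hN _ ((measurable_add_const x0) ho.measurableSet) bS (star_shift ho hcv hx0)
    (fun s => ENNReal.ofReal (|deriv ψ s| ^ p)) (fun s => ENNReal.ofReal (m * ψ s ^ q)) m1.ennreal_ofReal
    c2.measurable.ennreal_ofReal H
  have s1 := shift_lint x0 ho.measurableSet (fun y => ENNReal.ofReal (|deriv ψ ‖y‖| ^ p))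
  have s2 := shift_lint x0 ho.measurableSet (fun y => ENNReal.ofReal (m * ψ ‖y‖ ^ q))
  have i1 : IntegrableOn (fun x => |deriv ψ ‖x - x0‖| ^ p) Ω := by
    refine Measure.integrableOn_of_bounded (M := (L:ℝ) ^ p) hb.measure_lt_top.ne
      (m1.comp (by fun_prop : Measurable fun x : EuclideanSpace ℝ (Fin N) => ‖x - x0‖)).aestronglyMeasurable ?_
    refine ae_of_all _ fun s => ?_
    rw [Real.norm_of_nonneg (by positivity)]
    exact Real.rpow_le_rpow (abs_nonneg _) (norm_deriv_le_of_lipschitz hψ) (by linarith)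
  have i2 : IntegrableOn (fun x => m * ψ ‖x - x0‖ ^ q) Ω := intOn_cont hb
    (c2.comp (by fun_prop : Continuous fun x : EuclideanSpace ℝ (Fin N) => ‖x - x0‖)).continuousOn
  refine ⟨i1, ?_⟩
  rw [← integral_const_mul]
  have k2 : ENNReal.ofReal (∫ x in Ω, |deriv ψ ‖x - x0‖| ^ p) ≤ ENNReal.ofReal (∫ x in Ω, m * ψ ‖x - x0‖ ^ q) := by
    rw [ofReal_integral_eq_lintegral_ofReal i1 (ae_of_all _ fun x => by positivity),
      ofReal_integral_eq_lintegral_ofReal i2 (ae_of_all _ fun x => mul_nonneg hm.le (Real.rpow_nonneg (nn _) _))]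
    rw [s1, s2]
    exact key
  exact (ENNReal.ofReal_le_ofReal_iff (integral_nonneg fun x => mul_nonneg hm.le (Real.rpow_nonneg (nn _) _))).1 k2

theorem test_fun (hN : 2 ≤ N) (ho : IsOpen Ω) (hb : Bornology.IsBounded Ω) (hcv : Convex ℝ Ω) (hne : Ω.Nonempty)
    (hψ : LipschitzWith L ψ) (nn : ∀ r, 0 ≤ ψ r) {p q m : ℝ} (hp : 1 < p) (hpq : p ≤ q) (hm : 0 < m)
    (hz : ∀ r, diam Ω / 2 ≤ r → ψ r = 0) (h0 : 0 < ψ 0)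
    (H : ∀ r, 0 ≤ r → ∫⁻ s in Ioo 0 r, ENNReal.ofReal (s ^ (N - 1)) * ENNReal.ofReal (|deriv ψ s| ^ p) ≤
        ∫⁻ s in Ioo 0 r, ENNReal.ofReal (s ^ (N - 1)) * ENNReal.ofReal (m * ψ s ^ q))
    (mass : ∫⁻ x : EuclideanSpace ℝ (Fin N), ENNReal.ofReal (ψ ‖x‖ ^ q) ≤ 1) :
    muPQ p q Ω ≤ m := by
  obtain ⟨x0, hx0, x1, hx1, hd⟩ := exists_diam hb hne
  have q1 : 1 < q := by linarith
  have d0 : 0 < diam Ω := by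
    by_contra! h
    have := hz 0 (by linarith)
    linarith
  have x01 : x0 ≠ x1 := by intro h; rw [h, dist_self] at hd; linarith
  obtain ⟨i0, e0⟩ := energy_shift hN ho hb hcv hψ nn hp (by linarith) hm H hx0
  obtain ⟨i1, e1⟩ := energy_shift hN ho hb hcv hψ nn hp (by linarith) hm H hx1
  have lf : ∀ z : EuclideanSpace ℝ (Fin N), LipschitzWith L (fun x => ψ ‖x - z‖) := by
    intro z
    have hl : LipschitzWith 1 (fun y : EuclideanSpace ℝ (Fin N) => ‖y - z‖) := by
      apply LipschitzWith.of_dist_le_mul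
      intro y w
      have := abs_norm_sub_norm_le (y - z) (w - z)
      simpa [Real.dist_eq, dist_eq_norm] using this
    simpa [Function.comp_def] using hψ.comp hl
  set f0 : EuclideanSpace ℝ (Fin N) → ℝ := fun x => ψ ‖x - x0‖ with hf0
  set f1 : EuclideanSpace ℝ (Fin N) → ℝ := fun x => ψ ‖x - x1‖ with hf1
  have c0 : Continuous f0 := (lf x0).continuous
  have c1 : Continuous f1 := (lf x1).continuous
  have cr : ∀ s : ℝ, 0 ≤ s → ∀ f : EuclideanSpace ℝ (Fin N) → ℝ, Continuous f → Continuous (fun x => f x ^ s) :=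
    fun s hs f hf => hf.rpow_const fun _ => Or.inr hs
  have exp : ∀ z ∈ closure Ω, ∃ x ∈ Ω, 0 < ψ ‖x - z‖ := by
    intro z hz'
    have ho' : IsOpen {x | 0 < ψ ‖x - z‖} := isOpen_lt continuous_const (lf z).continuous
    obtain ⟨x, h1, h2⟩ := mem_closure_iff.1 hz' _ ho' (by simpa using h0)
    exact ⟨x, h2, h1⟩
  have far : ∀ x, ‖x - x0‖ < diam Ω / 2 → diam Ω / 2 < ‖x - x1‖ := by
    intro x hx
    have := dist_triangle x0 x x1
    rw [hd, dist_comm x0 x, dist_eq_norm, dist_eq_norm] at this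
    linarith
  have dis : ∀ x, f0 x = 0 ∨ f1 x = 0 := by
    intro x
    by_cases h : ‖x - x0‖ < diam Ω / 2
    · exact Or.inr (hz _ (far x h).le)
    · exact Or.inl (hz _ (not_lt.1 h))
  set I0 := ∫ x in Ω, f0 x ^ (q - 1) with hI0
  set I1 := ∫ x in Ω, f1 x ^ (q - 1) with hI1
  set M0 := ∫ x in Ω, f0 x ^ q with hM0
  set M1 := ∫ x in Ω, f1 x ^ q with hM1
  have posI : ∀ s : ℝ, 0 < s → ∀ z ∈ closure Ω, 0 < ∫ x in Ω, ψ ‖x - z‖ ^ s := by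
    intro s hs z hz'
    apply int_pos ho hb (cr s hs.le _ (lf z).continuous).continuousOn (fun x _ => Real.rpow_nonneg (nn _) _)
    obtain ⟨x, h1, h2⟩ := exp z hz'
    exact ⟨x, h1, by positivity⟩
  have I0p : 0 < I0 := posI _ (by linarith) x0 hx0
  have I1p : 0 < I1 := posI _ (by linarith) x1 hx1
  have M0p : 0 < M0 := posI _ (by linarith) x0 hx0
  have M1p : 0 < M1 := posI _ (by linarith) x1 hx1
  have iq0 : IntegrableOn (fun x => f0 x ^ q) Ω := intOn_cont hb (cr q (by linarith) _ c0).continuousOn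
  have iq1 : IntegrableOn (fun x => f1 x ^ q) Ω := intOn_cont hb (cr q (by linarith) _ c1).continuousOn
  have ir0 : IntegrableOn (fun x => f0 x ^ (q-1)) Ω := intOn_cont hb (cr (q-1) (by linarith) _ c0).continuousOn
  have ir1 : IntegrableOn (fun x => f1 x ^ (q-1)) Ω := intOn_cont hb (cr (q-1) (by linarith) _ c1).continuousOn
  have M01 : M0 + M1 ≤ 1 := by
    have k : ENNReal.ofReal (M0 + M1) ≤ 1 := by
      rw [ENNReal.ofReal_add M0p.le M1p.le, hM0, hM1,
        ofReal_integral_eq_lintegral_ofReal iq0 (ae_of_all _ fun x => Real.rpow_nonneg (nn _) _),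
        ofReal_integral_eq_lintegral_ofReal iq1 (ae_of_all _ fun x => Real.rpow_nonneg (nn _) _)]
      have s0 := shift_lint x0 ho.measurableSet (fun y => ENNReal.ofReal (ψ ‖y‖ ^ q))
      have s1 := shift_lint x1 ho.measurableSet (fun y => ENNReal.ofReal (ψ ‖y‖ ^ q))
      rw [s0, s1, ← lintegral_union (show MeasurableSet {y | y + x1 ∈ Ω} from (measurable_add_const x1) ho.measurableSet)]
      · exact (setLIntegral_le_lintegral _ _).trans mass
      · rw [Set.disjoint_left]
        intro y hy hy'
        have h3 := dist_lt_diam_of_open ho hb hy hy' (by simpa using x01)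
        rw [dist_add_left, hd] at h3
        exact lt_irrefl _ h3
    exact ENNReal.ofReal_le_one.1 k
  set a := I0 ^ (-(q - 1)⁻¹) with ha
  set b := I1 ^ (-(q - 1)⁻¹) with hb'
  have a0 : 0 < a := by positivity
  have b0 : 0 < b := by positivity
  have aI : a ^ (q - 1) * I0 = 1 := by
    rw [ha, ← Real.rpow_mul I0p.le, neg_mul, inv_mul_cancel₀ (by linarith), Real.rpow_neg_one, inv_mul_cancel₀ I0p.ne']
  have bI : b ^ (q - 1) * I1 = 1 := by
    rw [hb', ← Real.rpow_mul I1p.le, neg_mul, inv_mul_cancel₀ (by linarith), Real.rpow_neg_one, inv_mul_cancel₀ I1p.ne']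
  set v : EuclideanSpace ℝ (Fin N) → ℝ := fun x => a * f0 x - b * f1 x with hv
  have f0n : ∀ x, 0 ≤ f0 x := fun x => nn _
  have f1n : ∀ x, 0 ≤ f1 x := fun x => nn _
  have pw : ∀ s : ℝ, 0 ≤ s → |s| ^ (q - 2) * s = s ^ (q - 1) := by
    intro s hs
    rcases hs.eq_or_lt with h | h
    · rw [← h, Real.zero_rpow (by linarith), mul_zero]
    · rw [abs_of_pos h, show q - 1 = (q - 2) + 1 by ring, Real.rpow_add_one h.ne']
  have con : (∫ x in Ω, |v x| ^ (q - 2) * v x) = 0 := by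
    have : ∀ x, |v x| ^ (q - 2) * v x = a ^ (q - 1) * f0 x ^ (q - 1) - b ^ (q - 1) * f1 x ^ (q - 1) := by
      intro x
      have z : (0:ℝ) ^ (q - 1) = 0 := Real.zero_rpow (by linarith)
      rcases dis x with h | h
      · have : v x = -(b * f1 x) := by simp [hv, h]
        rw [this, h, z, abs_neg, mul_neg, pw _ (mul_nonneg b0.le (f1n x)), Real.mul_rpow b0.le (f1n x)]
        ring
      · have : v x = (a * f0 x) := by simp [hv, h]
        rw [this, h, z, pw _ (mul_nonneg a0.le (f0n x)), Real.mul_rpow a0.le (f0n x)]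
        ring
    simp only [this]
    rw [integral_sub (ir0.const_mul _) (ir1.const_mul _), integral_const_mul, integral_const_mul, aI, bI, sub_self]
  have mas : ∫ x in Ω, |v x| ^ q = a ^ q * M0 + b ^ q * M1 := by
    have : ∀ x, |v x| ^ q = a ^ q * f0 x ^ q + b ^ q * f1 x ^ q := by
      intro x
      have z : (0:ℝ) ^ q = 0 := Real.zero_rpow (by linarith)
      rcases dis x with h | h
      · have : v x = -(b * f1 x) := by simp [hv, h]
        rw [this, h, z, abs_neg, abs_of_nonneg (mul_nonneg b0.le (f1n x)), Real.mul_rpow b0.le (f1n x)]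
        ring
      · have : v x = (a * f0 x) := by simp [hv, h]
        rw [this, h, z, abs_of_nonneg (mul_nonneg a0.le (f0n x)), Real.mul_rpow a0.le (f0n x)]
        ring
    simp only [this]
    rw [integral_add (iq0.const_mul _) (iq1.const_mul _), integral_const_mul, integral_const_mul]
  have lip : ∃ K : ℝ≥0, LipschitzOnWith K v (closure Ω) := by
    refine ⟨‖a‖₊ * L + ‖b‖₊ * L, LipschitzWith.lipschitzOnWith ?_⟩
    exact ((lipschitzWith_smul a).comp (lf x0)).sub ((lipschitzWith_smul b).comp (lf x1))
  obtain ⟨K, hK⟩ := lip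
  have vne : ∃ x ∈ Ω, v x ≠ 0 := by
    obtain ⟨x, hx, h⟩ := exp x0 hx0
    refine ⟨x, hx, ?_⟩
    have h1 : f1 x = 0 := by
      rcases dis x with h' | h'
      · exact absurd h' h.ne'
      · exact h'
    have : v x = a * f0 x := by simp [hv, h1]
    rw [this]
    exact (mul_pos a0 h).ne'
  have nz : ∀ (z : EuclideanSpace ℝ (Fin N)), ∀ᵐ x : EuclideanSpace ℝ (Fin N), ‖x - z‖ ≠ diam Ω / 2 := by
    intro z
    have := Measure.addHaar_sphere_of_ne_zero (volume : Measure (EuclideanSpace ℝ (Fin N))) z (r := diam Ω / 2) (by linarith)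
    rw [ae_iff]
    convert this using 2
    ext x
    simp [dist_eq_norm]
  have ne1 : ∀ (z : EuclideanSpace ℝ (Fin N)), ∀ᵐ x : EuclideanSpace ℝ (Fin N), x ≠ z := by
    intro z
    have : Nontrivial (EuclideanSpace ℝ (Fin N)) := ⟨x0, x1, x01⟩
    rw [ae_iff]
    simp
  have loc0 : ∀ z x : EuclideanSpace ℝ (Fin N), diam Ω / 2 < ‖x - z‖ → ∀ᶠ y in nhds x, ψ ‖y - z‖ = 0 := by
    intro z x h
    have : ContinuousAt (fun y => ‖y - z‖) x := by fun_prop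
    filter_upwards [this.eventually (lt_mem_nhds h)] with y hy
    exact hz _ (le_of_lt hy)
  have grad : ∀ᵐ x : EuclideanSpace ℝ (Fin N), ‖fderiv ℝ v x‖ ^ p ≤
      a ^ p * |deriv ψ ‖x - x0‖| ^ p + b ^ p * |deriv ψ ‖x - x1‖| ^ p := by
    filter_upwards [nz x0, nz x1, ne1 x0, ne1 x1] with x h0 h1 n0 n1
    by_cases g1 : diam Ω / 2 < ‖x - x1‖
    · have ev : v =ᶠ[nhds x] fun y => a * f0 y := by
        filter_upwards [loc0 x1 x g1] with y hy
        simp [hv, hf1, hy]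
      have : ‖fderiv ℝ v x‖ ≤ a * |deriv ψ ‖x - x0‖| := by
        rw [ev.fderiv_eq]
        have e : fderiv ℝ (fun y => a * f0 y) x = a • fderiv ℝ f0 x := congrFun (fderiv_const_smul_field (𝕜 := ℝ) (f := f0) a) x
        rw [e, norm_smul, Real.norm_of_nonneg a0.le]
        exact mul_le_mul_of_nonneg_left (fderiv_radial x0 x n0) a0.le
      have h2 := Real.rpow_le_rpow (norm_nonneg _) this (by linarith : 0 ≤ p)
      rw [Real.mul_rpow a0.le (abs_nonneg _)] at h2
      have : 0 ≤ b ^ p * |deriv ψ ‖x - x1‖| ^ p := by positivity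
      linarith
    · have g0 : diam Ω / 2 < ‖x - x0‖ := by
        by_contra hc
        exact g1 (far x (lt_of_le_of_ne (not_lt.1 hc) h0))
      have ev : v =ᶠ[nhds x] fun y => (-b) * f1 y := by
        filter_upwards [loc0 x0 x g0] with y hy
        simp [hv, hf0, hy]
      have : ‖fderiv ℝ v x‖ ≤ b * |deriv ψ ‖x - x1‖| := by
        rw [ev.fderiv_eq]
        have e : fderiv ℝ (fun y => (-b) * f1 y) x = (-b) • fderiv ℝ f1 x := congrFun (fderiv_const_smul_field (𝕜 := ℝ) (f := f1) (-b)) x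
        rw [e, norm_smul, norm_neg, Real.norm_of_nonneg b0.le]
        exact mul_le_mul_of_nonneg_left (fderiv_radial x1 x n1) b0.le
      have h2 := Real.rpow_le_rpow (norm_nonneg _) this (by linarith : 0 ≤ p)
      rw [Real.mul_rpow b0.le (abs_nonneg _)] at h2
      have : 0 ≤ a ^ p * |deriv ψ ‖x - x0‖| ^ p := by positivity
      linarith
  have num : ∫ x in Ω, ‖fderiv ℝ v x‖ ^ p ≤ m * (a ^ p * M0 + b ^ p * M1) := by
    calc _ ≤ ∫ x in Ω, (a ^ p * |deriv ψ ‖x - x0‖| ^ p + b ^ p * |deriv ψ ‖x - x1‖| ^ p) := by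
          apply integral_mono_of_nonneg (ae_of_all _ fun x => by positivity)
          · exact (i0.const_mul _).add (i1.const_mul _)
          · exact ae_restrict_of_ae grad
      _ = a ^ p * (∫ x in Ω, |deriv ψ ‖x - x0‖| ^ p) + b ^ p * ∫ x in Ω, |deriv ψ ‖x - x1‖| ^ p := by
          rw [integral_add (i0.const_mul _) (i1.const_mul _), integral_const_mul, integral_const_mul]
      _ ≤ a ^ p * (m * M0) + b ^ p * (m * M1) := by
          gcongr
      _ = _ := by ring
  refine (muPQ_le hK vne con).trans ?_
  unfold rayleighQuot
  rw [mas]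
  have hol := holder_two M0p M1p M01 (a := a ^ q) (b := b ^ q) (t := p / q) (by positivity) (by positivity)
    (by positivity) ((div_le_one (by linarith)).2 hpq)
  rw [← Real.rpow_mul a0.le, ← Real.rpow_mul b0.le, mul_div_cancel₀ _ (by linarith : q ≠ 0)] at hol
  rw [div_le_iff₀ (by positivity)]
  exact num.trans (mul_le_mul_of_nonneg_left hol hm.le)

end Test

section EL
variable {N : ℕ} {Ω : Set (EuclideanSpace ℝ (Fin N))}

theorem sgn_pow_eq {q : ℝ} (hq : 1 < q) (t : ℝ) : |t| ^ (q - 2) * t = (max t 0) ^ (q - 1) - (max (-t) 0) ^ (q - 1) := by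
  have z : (0:ℝ) ^ (q - 1) = 0 := Real.zero_rpow (by linarith)
  have pw : ∀ s : ℝ, 0 < s → |s| ^ (q - 2) * s = s ^ (q - 1) := by
    intro s h
    rw [abs_of_pos h, show q - 1 = (q - 2) + 1 by ring, Real.rpow_add_one h.ne']
  rcases lt_trichotomy t 0 with h | h | h
  · rw [max_eq_right h.le, max_eq_left (by linarith), z]
    have := pw (-t) (by linarith)
    rw [abs_neg] at this
    linarith
  · simp [h, z]
  · rw [max_eq_left h.le, max_eq_right (by linarith), z, pw t h, sub_zero]

theorem sgn_pow_cont {q : ℝ} (hq : 1 < q) : Continuous (fun t : ℝ => |t| ^ (q - 2) * t) := by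
  simp only [sgn_pow_eq hq]
  have h1 : Continuous (fun t : ℝ => (max t 0) ^ (q - 1)) :=
    (by fun_prop : Continuous fun t : ℝ => max t 0).rpow_const fun _ => Or.inr (by linarith)
  have h2 : Continuous (fun t : ℝ => (max (-t) 0) ^ (q - 1)) :=
    (by fun_prop : Continuous fun t : ℝ => max (-t) 0).rpow_const fun _ => Or.inr (by linarith)
  exact h1.sub h2

theorem pow_convex {q : ℝ} (hq : 1 < q) (a b : ℝ) : |b| ^ q + q * (|b| ^ (q - 2) * b) * (a - b) ≤ |a| ^ q := by
  have pos : ∀ a b : ℝ, 0 < b → |b| ^ q + q * (|b| ^ (q - 2) * b) * (a - b) ≤ |a| ^ q := by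
    intro a b hb
    set s := a / b - 1 with hs
    have ha : a = b * (1 + s) := by rw [hs]; field_simp; ring
    have h1 : 1 + q * s ≤ |1 + s| ^ q := by
      by_cases h : -1 ≤ s
      · rw [abs_of_nonneg (by linarith)]
        exact one_add_mul_self_le_rpow_one_add h hq.le
      · have : 0 ≤ |1 + s| ^ q := by positivity
        nlinarith
    have h2 : |b| ^ (q - 2) * b * b = b ^ q := by
      rw [abs_of_pos hb, ← Real.rpow_add_one hb.ne', ← Real.rpow_add_one hb.ne']
      congr 1; ring
    calc |b| ^ q + q * (|b| ^ (q - 2) * b) * (a - b) = b ^ q + q * s * (|b| ^ (q - 2) * b * b) := by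
          rw [ha, abs_of_pos hb]; ring
      _ = b ^ q * (1 + q * s) := by rw [h2]; ring
      _ ≤ b ^ q * |1 + s| ^ q := by gcongr
      _ = |a| ^ q := by rw [ha, abs_mul, Real.mul_rpow (abs_nonneg _) (abs_nonneg _), abs_of_pos hb]
  rcases lt_trichotomy b 0 with h | h | h
  · have := pos (-a) (-b) (by linarith)
    rw [abs_neg, abs_neg] at this
    linarith
  · rw [h]
    simp only [abs_zero, mul_zero, zero_mul, add_zero]
    rw [Real.zero_rpow (by linarith)]
    positivity
  · exact pos a b h

theorem exists_shift (ho : IsOpen Ω) (hb : Bornology.IsBounded Ω) {q : ℝ} (hq : 1 < q)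
    {v : EuclideanSpace ℝ (Fin N) → ℝ} (hv : Continuous v) :
    ∃ c : ℝ, ∫ x in Ω, |v x + c| ^ (q - 2) * (v x + c) = 0 := by
  have hc : Continuous fun c : ℝ => ∫ x in Ω, |v x + c| ^ (q - 2) * (v x + c) := by
    have h1 : Continuous (Function.uncurry fun (c : ℝ) (x : EuclideanSpace ℝ (Fin N)) => |v x + c| ^ (q - 2) * (v x + c)) := by
      have : Continuous fun z : ℝ × EuclideanSpace ℝ (Fin N) => v z.2 + z.1 := by fun_prop
      exact (sgn_pow_cont hq).comp this
    have h2 := continuous_parametric_integral_of_continuous (μ := volume.restrict Ω) h1 hb.isCompact_closure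
    rw [Measure.restrict_restrict isClosed_closure.measurableSet, inter_eq_self_of_subset_right subset_closure] at h2
    exact h2
  obtain ⟨B, hB⟩ := hb.isCompact_closure.exists_bound_of_continuousOn hv.continuousOn
  have hB' : ∀ x ∈ Ω, |v x| ≤ B := fun x hx => hB x (subset_closure hx)
  have := mem_range_of_exists_le_of_exists_ge hc (c := 0) ⟨-B, ?_⟩ ⟨B, ?_⟩
  · exact this
  · apply setIntegral_nonpos ho.measurableSet
    intro x hx
    apply mul_nonpos_of_nonneg_of_nonpos (by positivity)
    linarith [(abs_le.1 (hB' x hx)).2]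
  · apply setIntegral_nonneg ho.measurableSet
    intro x hx
    apply mul_nonneg (by positivity)
    linarith [(abs_le.1 (hB' x hx)).1]

theorem deriv_nonneg_of {G : ℝ → ℝ} {g : ℝ} (hG : HasDerivAt G g 0) (h0 : G 0 = 0) {δ0 : ℝ} (hδ : 0 < δ0)
    (nn : ∀ δ, 0 < δ → δ < δ0 → 0 ≤ G δ) : 0 ≤ g := by
  have h := hasDerivAt_iff_tendsto_slope.1 hG
  have h2 := h.mono_left (nhdsWithin_mono 0 (show Ioi 0 ⊆ {(0:ℝ)}ᶜ from fun x hx => (ne_of_gt hx)))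
  refine ge_of_tendsto h2 ?_
  filter_upwards [Ioo_mem_nhdsGT hδ] with δ hd
  rw [slope_def_field, h0, sub_zero, sub_zero]
  exact div_nonneg (nn δ hd.1 hd.2) hd.1.le

theorem fderiv_int {Kw : ℝ≥0} (hb : Bornology.IsBounded Ω) {w : EuclideanSpace ℝ (Fin N) → ℝ} (hw : LipschitzWith Kw w)
    {p : ℝ} (hp : 0 ≤ p) : IntegrableOn (fun x => ‖fderiv ℝ w x‖ ^ p) Ω := by
  refine Measure.integrableOn_of_bounded (M := (Kw:ℝ) ^ p) hb.measure_lt_top.ne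
    ((measurable_fderiv ℝ w).norm.pow_const p).aestronglyMeasurable ?_
  refine ae_of_all _ fun s => ?_
  rw [Real.norm_of_nonneg (by positivity)]
  exact Real.rpow_le_rpow (norm_nonneg _) (norm_fderiv_le_of_lipschitz ℝ hw) hp

theorem EL_ineq (ho : IsOpen Ω) (hb : Bornology.IsBounded Ω) {p q : ℝ} (hp : 1 < p) (hpq : p ≤ q)
    {u w : EuclideanSpace ℝ (Fin N) → ℝ} {K Kw : ℝ≥0} (hu : LipschitzWith K u) (hw : LipschitzWith Kw w)
    (hconstraint : (∫ x in Ω, |u x| ^ (q - 2) * u x) = 0)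
    (hnorm : (∫ x in Ω, |u x| ^ q) = 1)
    (hmin : (∫ x in Ω, ‖fderiv ℝ u x‖ ^ p) = muPQ p q Ω)
    (hwu : ∀ x, w x = 0 ∨ (w x = u x ∧ 0 < u x))
    (hfd : ∀ᵐ x, x ∈ Ω → fderiv ℝ w x = 0 ∨ fderiv ℝ w x = fderiv ℝ u x) :
    ∫ x in Ω, w x ^ q ≤ 1 ∧ ∫ x in Ω, ‖fderiv ℝ w x‖ ^ p ≤ muPQ p q Ω * ∫ x in Ω, w x ^ q := by
  have q1 : 1 < q := by linarith
  set μ := muPQ p q Ω with hμ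
  set M := ∫ x in Ω, w x ^ q with hM
  set E := ∫ x in Ω, ‖fderiv ℝ w x‖ ^ p with hE
  have wn : ∀ x, 0 ≤ w x := fun x => by rcases hwu x with h | h; exacts [h.ge, by rw [h.1]; exact h.2.le]
  have cu := hu.continuous
  have cw := hw.continuous
  have iwq : IntegrableOn (fun x => w x ^ q) Ω := intOn_cont hb (cw.rpow_const fun _ => Or.inr (by linarith)).continuousOn
  have iuq : IntegrableOn (fun x => |u x| ^ q) Ω := intOn_cont hb (cu.abs.rpow_const fun _ => Or.inr (by linarith)).continuousOn
  have isu : IntegrableOn (fun x => |u x| ^ (q - 2) * u x) Ω := intOn_cont hb ((sgn_pow_cont q1).comp cu).continuousOn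
  have M0 : 0 ≤ M := integral_nonneg fun x => Real.rpow_nonneg (wn x) _
  have M1 : M ≤ 1 := by
    rw [← hnorm]
    apply integral_mono iwq iuq
    intro x
    simp only
    rcases hwu x with h | h
    · rw [h, Real.zero_rpow (by linarith)]; positivity
    · rw [h.1, abs_of_pos h.2]
  refine ⟨M1, ?_⟩
  have μ0 : 0 ≤ μ := by rw [← hmin]; exact integral_nonneg fun x => by positivity
  have main : ∀ δ, 0 < δ → δ < q⁻¹ → 0 ≤ μ * (1 - (1 - q * δ * M) ^ (p / q)) - (1 - (1 - δ) ^ p) * E := by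
    intro δ d0 d1
    have dq : q * δ < 1 := by rwa [lt_inv_comm₀ d0 (by linarith), ← one_div, lt_div_iff₀ d0] at d1
    have dd : δ < 1 := by nlinarith
    obtain ⟨c, hc⟩ := exists_shift ho hb q1 (v := fun x => u x - δ * w x) (by fun_prop)
    set v : EuclideanSpace ℝ (Fin N) → ℝ := fun x => u x - δ * w x + c with hv
    have cv : Continuous v := by fun_prop
    have ivq : IntegrableOn (fun x => |v x| ^ q) Ω := intOn_cont hb (cv.abs.rpow_const fun _ => Or.inr (by linarith)).continuousOn
    have iadd : IntegrableOn (fun x => |u x| ^ q + (q * c) * (|u x| ^ (q - 2) * u x)) Ω := iuq.add (isu.const_mul _)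
    have low : 1 - q * δ * M ≤ ∫ x in Ω, |v x| ^ q := by
      have e : 1 - q * δ * M = ∫ x in Ω, (|u x| ^ q + (q * c) * (|u x| ^ (q - 2) * u x) - (q * δ) * w x ^ q) := by
        rw [integral_sub iadd (iwq.const_mul _), integral_add iuq (isu.const_mul _),
          integral_const_mul, integral_const_mul, hnorm, hconstraint]
        ring
      rw [e]
      refine integral_mono (iadd.sub (iwq.const_mul _)) ivq fun x => ?_
      simp only
      have h1 := pow_convex q1 (v x) (u x)
      have h2 : |u x| ^ (q - 2) * u x * w x = w x ^ q := by
        rcases hwu x with h | h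
        · rw [h, Real.zero_rpow (by linarith), mul_zero]
        · rw [h.1, abs_of_pos h.2, ← Real.rpow_add_one h.2.ne', ← Real.rpow_add_one h.2.ne']
          congr 1; ring
      have h3 : |u x| ^ q + q * (|u x| ^ (q - 2) * u x) * (v x - u x) =
          |u x| ^ q + q * c * (|u x| ^ (q - 2) * u x) - q * δ * (|u x| ^ (q - 2) * u x * w x) := by
        rw [hv]; ring
      rw [h3, h2] at h1
      exact h1
    have lpos : 0 < 1 - q * δ * M := by nlinarith [mul_pos (by linarith : 0 < q) d0]
    have vne : ∃ x ∈ Ω, v x ≠ 0 := by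
      by_contra! h
      have : ∫ x in Ω, |v x| ^ q = 0 := by
        rw [setIntegral_congr_fun (g := fun _ => 0) ho.measurableSet]
        · simp
        · intro x hx
          simp [h x hx, Real.zero_rpow (by linarith : q ≠ 0)]
      linarith
    have vl : LipschitzWith (K + ‖δ‖₊ * Kw) v := by
      have h1 : LipschitzWith (K + ‖δ‖₊ * Kw) (fun x => u x - δ * w x) := hu.sub ((lipschitzWith_smul δ).comp hw)
      simpa using h1.add (LipschitzWith.const c)
    have R := muPQ_le (p := p) vl.lipschitzOnWith vne hc
    have num : ∫ x in Ω, ‖fderiv ℝ v x‖ ^ p = μ - (1 - (1 - δ) ^ p) * E := by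
      rw [← hmin, hE, ← integral_const_mul, ← integral_sub (fderiv_int hb hu (by linarith)) ((fderiv_int hb hw (by linarith)).const_mul _)]
      apply setIntegral_congr_ae ho.measurableSet
      filter_upwards [hfd, hu.ae_differentiableAt, hw.ae_differentiableAt] with x h1 h2 h3 hx
      have e : fderiv ℝ v x = fderiv ℝ u x - δ • fderiv ℝ w x := by
        have := ((h2.hasFDerivAt.sub (h3.hasFDerivAt.const_smul δ)).add_const c).fderiv
        exact this
      rw [e]
      rcases h1 hx with h | h
      · rw [h]; simp [Real.zero_rpow (by linarith : p ≠ 0)]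
      · rw [h]
        have : fderiv ℝ u x - δ • fderiv ℝ u x = (1 - δ) • fderiv ℝ u x := by module
        rw [this, norm_smul, Real.norm_of_nonneg (by linarith), Real.mul_rpow (by linarith) (norm_nonneg _)]
        ring
    unfold rayleighQuot at R
    rw [num, le_div_iff₀ (by apply Real.rpow_pos_of_pos; linarith)] at R
    have h4 : (1 - q * δ * M) ^ (p / q) ≤ (∫ x in Ω, |v x| ^ q) ^ (p / q) :=
      Real.rpow_le_rpow lpos.le low (by positivity)
    have h5 := mul_le_mul_of_nonneg_left h4 μ0
    linarith
  have hder : HasDerivAt (fun δ => μ * (1 - (1 - q * δ * M) ^ (p / q)) - (1 - (1 - δ) ^ p) * E)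
      (μ * (p * M) - p * E) 0 := by
    have a1 : HasDerivAt (fun δ : ℝ => 1 - q * δ * M) (-(q * M)) 0 := by
      have := (((hasDerivAt_id (0:ℝ)).const_mul q).mul_const M).const_sub 1
      simpa using this
    have a2 := a1.rpow_const (p := p / q) (Or.inl (by simp))
    have a3 : HasDerivAt (fun δ : ℝ => 1 - δ) (-1) 0 := by
      simpa using (hasDerivAt_id (0:ℝ)).const_sub 1
    have a4 := a3.rpow_const (p := p) (Or.inl (by simp))
    have := ((a2.const_sub 1).const_mul μ).sub ((a4.const_sub 1).mul_const E)
    refine this.congr_deriv ?_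
    simp only [mul_zero, zero_mul, sub_zero, Real.one_rpow]
    field_simp
  have := deriv_nonneg_of hder (by simp) (inv_pos.2 (by linarith : 0 < q)) main
  nlinarith

end EL

section EL
variable {N : ℕ} {Ω : Set (EuclideanSpace ℝ (Fin N))}

theorem energy_ne (hN : 2 ≤ N) {w : EuclideanSpace ℝ (Fin N) → ℝ} {Kw : ℝ≥0} (hw : LipschitzWith Kw w)
    (nn : ∀ x, 0 ≤ w x) (hs : HasCompactSupport w) (hx : ∃ x, 0 < w x) : ¬ ∀ᵐ x, fderiv ℝ w x = 0 := by
  intro h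
  set e : EuclideanSpace ℝ (Fin N) := EuclideanSpace.single ⟨0, by omega⟩ 1 with he
  have e1 : inner ℝ e e = (1:ℝ) := by simp [he]
  have hl : LipschitzWith ‖innerSL ℝ e‖₊ (innerSL ℝ e) := (innerSL ℝ e).lipschitz
  have key := hl.integral_lineDeriv_mul_eq (μ := volume) hw hs e
  have l1 : ∀ x, lineDeriv ℝ (innerSL ℝ e) x e = 1 := by
    intro x
    rw [(innerSL ℝ e).differentiableAt.lineDeriv_eq_fderiv, ContinuousLinearMap.fderiv]
    simpa using e1
  have l2 : (fun x => lineDeriv ℝ w x (-e) * innerSL ℝ e x) =ᵐ[volume] fun _ => 0 := by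
    filter_upwards [h, hw.ae_differentiableAt] with x h1 h2
    rw [h2.lineDeriv_eq_fderiv, h1]
    simp
  rw [integral_congr_ae l2] at key
  simp only [l1, one_mul, integral_zero] at key
  have hi : Integrable w := hw.continuous.integrable_of_hasCompactSupport hs
  rw [integral_eq_zero_iff_of_nonneg nn hi] at key
  have := (hw.continuous.ae_eq_iff_eq volume continuous_const).1 key
  obtain ⟨x, hx⟩ := hx
  rw [this] at hx
  exact lt_irrefl _ hx

end EL

section comp
variable {N : ℕ} {Ω : Set (EuclideanSpace ℝ (Fin N))}

theorem seg_frontier {D : Set (EuclideanSpace ℝ (Fin N))} (hD : IsOpen D) {x y : EuclideanSpace ℝ (Fin N)}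
    (hx : x ∈ D) (hy : y ∉ D) : ∃ z ∈ segment ℝ x y, z ∈ closure D ∧ z ∉ D := by
  by_contra! h
  have hs : IsPreconnected (segment ℝ x y) := (convex_segment x y).isPreconnected
  have hy' : y ∉ closure D := fun hc => hy (h y (right_mem_segment ℝ x y) hc)
  obtain ⟨z, -, hz1, hz2⟩ := hs D (closure D)ᶜ hD isClosed_closure.isOpen_compl
    (fun z hz => by
      by_cases hc : z ∈ closure D
      · exact Or.inl (h z hz hc)
      · exact Or.inr hc)
    ⟨x, left_mem_segment ℝ x y, hx⟩ ⟨y, right_mem_segment ℝ x y, hy'⟩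
  exact hz2 (subset_closure hz1)

theorem dist_seg {x y z : EuclideanSpace ℝ (Fin N)} (hz : z ∈ segment ℝ x y) : dist x z ≤ dist x y := by
  have := dist_add_dist_of_mem_segment hz
  have := dist_nonneg (x := z) (y := y)
  linarith

theorem indic_lip {D : Set (EuclideanSpace ℝ (Fin N))} (hD : IsOpen D) {u : EuclideanSpace ℝ (Fin N) → ℝ} {K : ℝ≥0}
    (hu : LipschitzWith K u) (hz : ∀ z ∈ closure D, z ∉ D → u z = 0) : LipschitzWith K (D.indicator u) := by
  have key : ∀ x y, x ∈ D → y ∉ D → |u x| ≤ K * dist x y := by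
    intro x y hx hy
    obtain ⟨z, hzs, h1, h2⟩ := seg_frontier hD hx hy
    have := hu.dist_le_mul x z
    rw [hz z h1 h2, Real.dist_eq, sub_zero] at this
    exact this.trans (mul_le_mul_of_nonneg_left (dist_seg hzs) K.2)
  apply LipschitzWith.of_dist_le_mul
  intro x y
  by_cases hx : x ∈ D <;> by_cases hy : y ∈ D
  · rw [indicator_of_mem hx, indicator_of_mem hy]; exact hu.dist_le_mul x y
  · rw [indicator_of_mem hx, indicator_of_notMem hy, Real.dist_eq, sub_zero]; exact key x y hx hy
  · rw [indicator_of_notMem hx, indicator_of_mem hy, dist_comm, Real.dist_eq, sub_zero, dist_comm]; exact key y x hy hx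
  · rw [indicator_of_notMem hx, indicator_of_notMem hy, dist_self]; positivity

theorem comp_zero {u : EuclideanSpace ℝ (Fin N) → ℝ} (hu : Continuous u) {x : EuclideanSpace ℝ (Fin N)}
    (hx : x ∈ Ω) (hux : 0 < u x)
    (hcl : closure (connectedComponentIn {y | y ∈ Ω ∧ 0 < u y} x) ⊆ Ω) :
    ∀ z ∈ closure (connectedComponentIn {y | y ∈ Ω ∧ 0 < u y} x),
      z ∉ connectedComponentIn {y | y ∈ Ω ∧ 0 < u y} x → u z = 0 := by
  intro z hz hzD
  set D := connectedComponentIn {y | y ∈ Ω ∧ 0 < u y} x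
  have hsub : D ⊆ {y | y ∈ Ω ∧ 0 < u y} := connectedComponentIn_subset _ _
  have hxD : x ∈ D := mem_connectedComponentIn ⟨hx, hux⟩
  have h0 : 0 ≤ u z := by
    have : closure D ⊆ {y | 0 ≤ u y} := closure_minimal (fun y hy => (hsub hy).2.le) (isClosed_le continuous_const hu)
    exact this hz
  by_contra hne
  have hp : 0 < u z := lt_of_le_of_ne h0 (Ne.symm hne)
  have hpre : IsPreconnected (insert z D) :=
    isPreconnected_connectedComponentIn.subset_closure (subset_insert _ _) (insert_subset hz subset_closure)
  have := hpre.subset_connectedComponentIn (mem_insert_of_mem z hxD)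
    (insert_subset (show z ∈ {y | y ∈ Ω ∧ 0 < u y} from ⟨hcl hz, hp⟩) hsub)
  exact hzD (this (mem_insert _ _))

theorem fd_indic {D : Set (EuclideanSpace ℝ (Fin N))} (hD : IsOpen D) {u : EuclideanSpace ℝ (Fin N) → ℝ}
    (hpos : ∀ y ∈ D, 0 ≤ u y) (x : EuclideanSpace ℝ (Fin N)) :
    (x ∉ D ∧ fderiv ℝ (D.indicator u) x = 0) ∨ (x ∈ D ∧ fderiv ℝ (D.indicator u) x = fderiv ℝ u x) := by
  by_cases hx : x ∈ D
  · refine Or.inr ⟨hx, Filter.EventuallyEq.fderiv_eq ?_⟩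
    filter_upwards [hD.mem_nhds hx] with y hy
    exact indicator_of_mem hy u
  · refine Or.inl ⟨hx, IsLocalMin.fderiv_eq_zero ?_⟩
    refine Filter.Eventually.of_forall fun y => ?_
    rw [indicator_of_notMem hx]
    exact indicator_nonneg hpos y

theorem dil_room (ho : IsOpen Ω) (hb : Bornology.IsBounded Ω) {D : Set (EuclideanSpace ℝ (Fin N))}
    (hcl : closure D ⊆ Ω) : ∃ ρ : ℝ, 1 < ρ ∧ ∀ y ∈ D, ∀ z ∈ D, ρ * dist y z ≤ diam Ω := by
  have hc : IsCompact (closure D) := isCompact_of_isClosed_isBounded isClosed_closure (hb.subset hcl)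
  obtain ⟨ε, ε0, hε⟩ := hc.exists_cthickening_subset_open ho hcl
  have dd : 0 ≤ diam Ω := diam_nonneg
  refine ⟨1 + ε / (diam Ω + 1), by simp only [lt_add_iff_pos_right]; positivity, fun y hy z hz => ?_⟩
  set t := ε / (diam Ω + 1) with ht
  have t0 : 0 < t := by positivity
  have hyz : dist y z ≤ diam Ω := dist_le_diam_of_mem hb (hcl (subset_closure hy)) (hcl (subset_closure hz))
  have hmem : z + t • (z - y) ∈ Ω := by
    apply hε
    apply mem_cthickening_of_dist_le _ z _ _ (subset_closure hz)
    rw [dist_eq_norm, add_sub_cancel_left, norm_smul, Real.norm_of_nonneg t0.le, ← dist_eq_norm, dist_comm]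
    have : t * (diam Ω + 1) = ε := by rw [ht]; field_simp
    nlinarith
  have := dist_le_diam_of_mem hb hmem (hcl (subset_closure hy))
  have e : z + t • (z - y) - y = (1 + t) • (z - y) := by module
  rw [dist_eq_norm, e, norm_smul, Real.norm_of_nonneg (by linarith), ← dist_eq_norm, dist_comm] at this
  exact this

end comp

section dil
variable {N : ℕ} {Ω : Set (EuclideanSpace ℝ (Fin N))}

theorem exp_neg {p q : ℝ} (hN : 2 ≤ N) (hp : 1 < p) (hpq : p ≤ q) (hq : ltCritical N p q) :
    (N : ℝ) - p - N * p / q < 0 := by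
  have q0 : 0 < q := by linarith
  have n0 : (0 : ℝ) < N := by positivity
  have h : q * (N - p) < N * p := by
    rcases lt_or_ge p N with h | h
    · have := hq h
      rwa [lt_div_iff₀ (by linarith)] at this
    · have : q * (N - p) ≤ 0 := mul_nonpos_of_nonneg_of_nonpos q0.le (by linarith)
      have : 0 < N * p := by positivity
      linarith
  rw [sub_neg, lt_div_iff₀ q0]
  linarith

theorem final_contra (hN : 2 ≤ N) {p q : ℝ} (hp : 1 < p) (hpq : p ≤ q) (hq : ltCritical N p q)
    (ho : IsOpen Ω) (hb : Bornology.IsBounded Ω) (hcv : Convex ℝ Ω) (hne : Ω.Nonempty)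
    {w : EuclideanSpace ℝ (Fin N) → ℝ} {K : ℝ≥0} (hw : LipschitzWith K w) (nn : ∀ x, 0 ≤ w x)
    (hs : HasCompactSupport w) (hx : ∃ x, 0 < w x) {ρ : ℝ} (hρ : 1 < ρ)
    (hdist : ∀ y, 0 < w y → ∀ z, 0 < w z → ρ * dist y z ≤ diam Ω)
    (hM : ∫ x, w x ^ q ≤ 1) (hE : ∫ x, ‖fderiv ℝ w x‖ ^ p ≤ muPQ p q Ω * ∫ x, w x ^ q) : False := by
  haveI : Nonempty (Fin N) := ⟨⟨0, by omega⟩⟩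
  haveI : Nontrivial (EuclideanSpace ℝ (Fin N)) := inferInstance
  have q0 : 0 < q := by linarith
  have ρ0 : 0 < ρ := by linarith
  have ⟨x0, hx0⟩ := hx
  set μ := muPQ p q Ω
  -- integrability
  have cw := hw.continuous
  have iw : Integrable (fun x => w x ^ q) :=
    (cw.rpow_const fun _ => Or.inr q0.le).integrable_of_hasCompactSupport
      (hs.comp_left (g := fun t : ℝ => t ^ q) (Real.zero_rpow q0.ne'))
  have iE : Integrable (fun x => ‖fderiv ℝ w x‖ ^ p) := by
    have h1 : IntegrableOn (fun x => ‖fderiv ℝ w x‖ ^ p) (tsupport w) :=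
      fderiv_int hs.isCompact.isBounded hw (by linarith)
    refine (integrableOn_iff_integrable_of_support_subset ?_).1 h1
    intro x hx
    by_contra hc
    apply hx
    have : fderiv ℝ w x = 0 := by
      by_contra h
      exact hc (support_fderiv_subset ℝ (f := w) h)
    simp [this, Real.zero_rpow (by linarith : p ≠ 0)]
  set M := ∫ x, w x ^ q with hMd
  set E := ∫ x, ‖fderiv ℝ w x‖ ^ p with hEd
  have nnq : ∀ x, 0 ≤ w x ^ q := fun x => Real.rpow_nonneg (nn x) _
  have nnE : ∀ x, 0 ≤ ‖fderiv ℝ w x‖ ^ p := fun x => by positivity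
  have M0 : 0 < M := by
    rw [hMd, integral_pos_iff_support_of_nonneg nnq iw]
    refine IsOpen.measure_pos volume ?_ ⟨x0, (Real.rpow_pos_of_pos hx0 q).ne'⟩
    exact (cw.rpow_const fun _ => Or.inr q0.le).isOpen_support
  have E0 : 0 < E := by
    refine lt_of_le_of_ne (integral_nonneg nnE) fun h => ?_
    have h2 := (integral_eq_zero_iff_of_nonneg nnE iE).1 h.symm
    apply energy_ne hN hw nn hs hx
    filter_upwards [h2] with x hx
    have := (Real.rpow_eq_zero (norm_nonneg _) (by linarith)).1 hx
    exact norm_eq_zero.1 this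
  -- dilation
  set κ := ρ ^ (-(N : ℝ) / q) with hκ
  have κ0 : 0 < κ := Real.rpow_pos_of_pos ρ0 _
  set w1 : EuclideanSpace ℝ (Fin N) → ℝ := fun x => κ * w (ρ⁻¹ • x) with hw1
  have lipd : LipschitzWith ‖ρ⁻¹‖₊ (fun x : EuclideanSpace ℝ (Fin N) => ρ⁻¹ • x) := lipschitzWith_smul _
  have lw1 : LipschitzWith (‖κ‖₊ * (K * ‖ρ⁻¹‖₊)) w1 := (lipschitzWith_smul κ).comp (hw.comp lipd)
  have n1 : ∀ x, 0 ≤ w1 x := fun x => mul_nonneg κ0.le (nn _)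
  have fr : Module.finrank ℝ (EuclideanSpace ℝ (Fin N)) = N := by simp
  have M1 : ∫ x, w1 x ^ q = M := by
    have e1 : ∀ x, w1 x ^ q = κ ^ q * w (ρ⁻¹ • x) ^ q := fun x => Real.mul_rpow κ0.le (nn _)
    simp_rw [e1]
    rw [integral_const_mul, Measure.integral_comp_inv_smul_of_nonneg volume (fun x => w x ^ q) ρ0.le, fr, ← hMd, smul_eq_mul, ← mul_assoc]
    have : κ ^ q * ρ ^ N = 1 := by
      rw [hκ, ← Real.rpow_mul ρ0.le, ← Real.rpow_natCast, ← Real.rpow_add ρ0]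
      have : -(N : ℝ) / q * q + N = 0 := by field_simp; ring
      rw [this, Real.rpow_zero]
    rw [this, one_mul]
  have fd1 : ∀ x, ‖fderiv ℝ w1 x‖ ^ p = (κ * ρ⁻¹) ^ p * ‖fderiv ℝ w (ρ⁻¹ • x)‖ ^ p := by
    intro x
    have e : fderiv ℝ w1 x = κ • (ρ⁻¹ • fderiv ℝ w (ρ⁻¹ • x)) := by
      have h1 : w1 = κ • (fun x => w (ρ⁻¹ • x)) := by ext x; simp [hw1]
      rw [h1, fderiv_const_smul_field, ← fderiv_comp_smul]
      rfl
    rw [e, smul_smul, norm_smul, Real.norm_of_nonneg (by positivity), Real.mul_rpow (by positivity) (norm_nonneg _)]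
  have i1 : Integrable (fun x => ‖fderiv ℝ w1 x‖ ^ p) := by
    simp_rw [fd1]
    exact ((integrable_comp_smul_iff volume (fun x => ‖fderiv ℝ w x‖ ^ p) (inv_ne_zero ρ0.ne')).2 iE).const_mul _
  have im1 : Integrable (fun x => w1 x ^ q) := by
    have e1 : ∀ x, w1 x ^ q = κ ^ q * w (ρ⁻¹ • x) ^ q := fun x => Real.mul_rpow κ0.le (nn _)
    simp_rw [e1]
    exact ((integrable_comp_smul_iff volume (fun x => w x ^ q) (inv_ne_zero ρ0.ne')).2 iw).const_mul _
  set E1 := ∫ x, ‖fderiv ℝ w1 x‖ ^ p with hE1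
  have E1nn : 0 ≤ E1 := integral_nonneg fun x => by positivity
  have E1lt : E1 < E := by
    have : E1 = ρ ^ ((N : ℝ) - p - N * p / q) * E := by
      rw [hE1]
      simp_rw [fd1]
      rw [integral_const_mul, Measure.integral_comp_inv_smul_of_nonneg volume (fun x => ‖fderiv ℝ w x‖ ^ p) ρ0.le, fr, ← hEd, smul_eq_mul, ← mul_assoc]
      congr 1
      rw [hκ, ← Real.rpow_neg_one ρ, ← Real.rpow_add ρ0, ← Real.rpow_mul ρ0.le, ← Real.rpow_natCast, ← Real.rpow_add ρ0]
      congr 1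
      field_simp
      ring
    rw [this]
    have := Real.rpow_lt_one_of_one_lt_of_neg hρ (exp_neg hN hp hpq hq)
    nlinarith
  have h1 : E1 < μ * M := E1lt.trans_le hE
  -- the intermediate constant
  have hdiv : E1 / M < μ := by rwa [div_lt_iff₀ M0]
  have hd0 : 0 ≤ E1 / M := div_nonneg E1nn M0.le
  set m := (E1 / M + μ) / 2 with hm
  have m0 : 0 < m := by linarith
  have hmμ : m < μ := by linarith
  have hEm : E1 < m * M := by rw [← div_lt_iff₀ M0]; linarith
  -- profile
  have hsup : ∃ R, ∀ x, R ≤ ‖x‖ → w1 x = 0 := by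
    obtain ⟨R, hR⟩ := hs.isCompact.isBounded.subset_ball (0 : EuclideanSpace ℝ (Fin N))
    refine ⟨ρ * R, fun x hx => ?_⟩
    have : w (ρ⁻¹ • x) = 0 := by
      apply image_eq_zero_of_notMem_tsupport
      intro hc
      have := hR hc
      rw [mem_ball_zero_iff, norm_smul, Real.norm_of_nonneg (by positivity), inv_mul_lt_iff₀ ρ0] at this
      linarith
    simp [hw1, this]
  obtain ⟨R, hR⟩ := hsup
  have hbd : ∃ W, ∀ x, w1 x ≤ W := by
    obtain ⟨W, hW⟩ := cw.bounded_above_of_compact_support hs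
    refine ⟨κ * W, fun x => mul_le_mul_of_nonneg_left ((le_abs_self _).trans (hW _)) κ0.le⟩
  obtain ⟨W, hW⟩ := hbd
  have lφ := prof_lip hN hW hR lw1
  have dpos : 0 < diam Ω := by
    obtain ⟨y, hy⟩ := hne
    refine diam_pos ?_ hb
    exact (infinite_of_mem_nhds y (ho.mem_nhds hy)).nontrivial
  have hz : ∀ r, diam Ω / 2 ≤ r → prof w1 r = 0 := by
    intro r hr
    refine le_antisymm (not_lt.1 fun h => ?_) (prof_nonneg hW r)
    rw [prof_lt_iff hW r le_rfl] at h
    have := isodiam {x | 0 < w1 x} (isOpen_lt continuous_const lw1.continuous)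
      ((isBounded_ball (x := (0 : EuclideanSpace ℝ (Fin N))) (r := R)).subset fun x hx => by
        rw [mem_ball_zero_iff]
        by_contra! hc
        exact (hR x hc).not_gt hx)
      (d := diam Ω) (fun x hx y hy => by
        have hx' : 0 < w (ρ⁻¹ • x) := (mul_pos_iff_of_pos_left κ0).1 hx
        have hy' : 0 < w (ρ⁻¹ • y) := (mul_pos_iff_of_pos_left κ0).1 hy
        have := hdist _ hx' _ hy'
        rwa [dist_smul₀, Real.norm_of_nonneg (by positivity), mul_inv_cancel_left₀ ρ0.ne'] at this)
    have h2 := h.trans_le this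
    rw [Measure.addHaar_closedBall_eq_addHaar_ball volume _ ] at h2
    exact absurd (VB_mono hr) (not_le.2 h2)
  have hlt : ∫⁻ x : EuclideanSpace ℝ (Fin N), ENNReal.ofReal (|deriv (prof w1) ‖x‖| ^ p) <
      ENNReal.ofReal m * ∫⁻ x : EuclideanSpace ℝ (Fin N), ENNReal.ofReal (prof w1 ‖x‖ ^ q) := by
    refine (schwarz_energy hN hW hR lw1 n1 hp).trans_lt ?_
    rw [prof_rpow hN hW hR lw1 n1 q0, ← ofReal_integral_eq_lintegral_ofReal i1 (ae_of_all _ fun x => by positivity),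
      ← ofReal_integral_eq_lintegral_ofReal im1 (ae_of_all _ fun x => Real.rpow_nonneg (n1 x) _), M1, ← hE1,
      ← ENNReal.ofReal_mul m0.le]
    exact (ENNReal.ofReal_lt_ofReal_iff (by positivity)).2 hEm
  obtain ⟨ψ, lψ, nψ, zψ, le, p0, H⟩ := radial_profile hN lφ (prof_anti hW) (prof_nonneg hW) (half_pos dpos) hz hp q0 m0 hlt
  have mass : ∫⁻ x : EuclideanSpace ℝ (Fin N), ENNReal.ofReal (ψ ‖x‖ ^ q) ≤ 1 := by
    calc ∫⁻ x : EuclideanSpace ℝ (Fin N), ENNReal.ofReal (ψ ‖x‖ ^ q)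
        ≤ ∫⁻ x : EuclideanSpace ℝ (Fin N), ENNReal.ofReal (prof w1 ‖x‖ ^ q) :=
          lintegral_mono fun x => ENNReal.ofReal_le_ofReal (Real.rpow_le_rpow (nψ _) (le _) q0.le)
      _ = ENNReal.ofReal M := by
        rw [prof_rpow hN hW hR lw1 n1 q0, ← ofReal_integral_eq_lintegral_ofReal im1 (ae_of_all _ fun x => Real.rpow_nonneg (n1 x) _), M1]
      _ ≤ 1 := by rw [← ENNReal.ofReal_one]; exact ENNReal.ofReal_le_ofReal hM
  exact absurd (test_fun hN ho hb hcv hne lψ nψ hp hpq m0 zψ p0 H mass) (not_le.2 hmμ)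

theorem pos_case (hN : 2 ≤ N) {p q : ℝ} (hp : 1 < p) (hpq : p ≤ q) (hq : ltCritical N p q)
    (ho : IsOpen Ω) (hb : Bornology.IsBounded Ω) (hcv : Convex ℝ Ω)
    {u : EuclideanSpace ℝ (Fin N) → ℝ} {K : ℝ≥0} (hu : LipschitzWith K u)
    (hconstraint : (∫ x in Ω, |u x| ^ (q - 2) * u x) = 0)
    (hnorm : (∫ x in Ω, |u x| ^ q) = 1)
    (hmin : (∫ x in Ω, ‖fderiv ℝ u x‖ ^ p) = muPQ p q Ω) (x : EuclideanSpace ℝ (Fin N)) (hx : x ∈ Ω) (hux : 0 < u x) :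
    (closure (connectedComponentIn {y | y ∈ Ω ∧ 0 < u y} x) ∩ frontier Ω).Nonempty := by
  by_contra hem
  rw [not_nonempty_iff_eq_empty] at hem
  have hopen : IsOpen {y | y ∈ Ω ∧ 0 < u y} := ho.inter (isOpen_lt continuous_const hu.continuous)
  have hz0 := comp_zero (Ω := Ω) hu.continuous hx hux
  have hD : IsOpen (connectedComponentIn {y | y ∈ Ω ∧ 0 < u y} x) := hopen.connectedComponentIn
  have hsub : connectedComponentIn {y | y ∈ Ω ∧ 0 < u y} x ⊆ {y | y ∈ Ω ∧ 0 < u y} := connectedComponentIn_subset _ _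
  have hxD : x ∈ connectedComponentIn {y | y ∈ Ω ∧ 0 < u y} x := mem_connectedComponentIn ⟨hx, hux⟩
  generalize connectedComponentIn {y | y ∈ Ω ∧ 0 < u y} x = D at *
  have hcl : closure D ⊆ Ω := by
    intro z hz
    have h1 : z ∈ closure Ω := closure_mono (fun y hy => (hsub hy).1) hz
    by_contra hc
    have : z ∈ closure D ∩ frontier Ω := ⟨hz, h1, by rwa [ho.interior_eq]⟩
    rw [hem] at this
    exact this
  have lw := indic_lip hD hu (hz0 hcl)
  have hpos : ∀ y ∈ D, 0 ≤ u y := fun y hy => (hsub hy).2.le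
  have hfd := fd_indic hD hpos
  obtain ⟨ρ, hρ, hdist⟩ := dil_room ho hb hcl
  have hsupp : Function.support (D.indicator u) ⊆ D := support_indicator_subset
  have posD : ∀ y, 0 < D.indicator u y → y ∈ D := fun y hy => hsupp hy.ne'
  have p0 : p ≠ 0 := by linarith
  have q0 : q ≠ 0 := by linarith
  have DΩ : D ⊆ Ω := subset_closure.trans hcl
  have EL := EL_ineq ho hb hp hpq hu lw hconstraint hnorm hmin
    (fun y => by
      by_cases hy : y ∈ D
      · exact Or.inr ⟨indicator_of_mem hy u, (hsub hy).2⟩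
      · exact Or.inl (indicator_of_notMem hy u))
    (ae_of_all _ fun y _ => (hfd y).imp And.right And.right)
  have e1 : ∫ y in Ω, D.indicator u y ^ q = ∫ y, D.indicator u y ^ q := by
    apply setIntegral_eq_integral_of_forall_compl_eq_zero
    intro y hy
    rw [indicator_of_notMem (fun h => hy (DΩ h)), Real.zero_rpow q0]
  have e2 : ∫ y in Ω, ‖fderiv ℝ (D.indicator u) y‖ ^ p = ∫ y, ‖fderiv ℝ (D.indicator u) y‖ ^ p := by
    apply setIntegral_eq_integral_of_forall_compl_eq_zero
    intro y hy
    rcases hfd y with h | h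
    · rw [h.2, norm_zero, Real.zero_rpow p0]
    · exact absurd (DΩ h.1) hy
  rw [e1, e2] at EL
  have hs : HasCompactSupport (D.indicator u) :=
    isCompact_of_isClosed_isBounded isClosed_closure (hb.subset ((closure_mono hsupp).trans hcl))
  exact final_contra hN hp hpq hq ho hb hcv ⟨x, hx⟩ lw (indicator_nonneg hpos) hs
    ⟨x, by rw [indicator_of_mem hxD]; exact hux⟩ hρ
    (fun y hy z hz => hdist y (posD y hy) z (posD z hz)) EL.1 EL.2

end dil

end helpers

/-- Proposition 5.1, nodal domain property. Let `1 < p ≤ q < p*`,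
`Ω ⊂ ℝ^N` open bounded convex, and let `u` be a Lipschitz function on `closure Ω` with
`∫_Ω |u|^(q-2) u = 0`, `∫_Ω |u|^q = 1` and `∫_Ω |∇u|^p = μ_{p,q}(Ω)` (a minimizer).
Then every connected component of `{u > 0}` and of `{u < 0}` inside `Ω` has closure
meeting `∂Ω`; no nodal domain is compactly contained in `Ω`. -/
theorem nodal_domain_touches_boundary {N : ℕ} (hN : 2 ≤ N) (p q : ℝ) (hp : 1 < p)
    (hpq : p ≤ q) (hq : ltCritical N p q)
    (Ω : Set (EuclideanSpace ℝ (Fin N))) (hΩo : IsOpen Ω)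
    (hΩb : Bornology.IsBounded Ω) (hΩc : Convex ℝ Ω) (hΩne : Ω.Nonempty)
    (u : EuclideanSpace ℝ (Fin N) → ℝ) (K : NNReal)
    (hu : LipschitzOnWith K u (closure Ω))
    (hconstraint : (∫ x in Ω, |u x| ^ (q - 2) * u x) = 0)
    (hnorm : (∫ x in Ω, |u x| ^ q) = 1)
    (hmin : (∫ x in Ω, ‖fderiv ℝ u x‖ ^ p) = muPQ p q Ω) :
    (∀ x ∈ Ω, 0 < u x →
      (closure (connectedComponentIn {y | y ∈ Ω ∧ 0 < u y} x) ∩ frontier Ω).Nonempty) ∧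
    (∀ x ∈ Ω, u x < 0 →
      (closure (connectedComponentIn {y | y ∈ Ω ∧ u y < 0} x) ∩ frontier Ω).Nonempty) := by
  obtain ⟨g, hg, heq⟩ := hu.extend_real
  have hΩ : ∀ x ∈ Ω, g x = u x := fun x hx => (heq (subset_closure hx)).symm
  have hev : ∀ x ∈ Ω, fderiv ℝ g x = fderiv ℝ u x := by
    intro x hx
    apply Filter.EventuallyEq.fderiv_eq
    filter_upwards [hΩo.mem_nhds hx] with y hy
    exact hΩ y hy
  have mΩ := hΩo.measurableSet
  have c1 : (∫ x in Ω, |g x| ^ (q - 2) * g x) = 0 := by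
    rw [← hconstraint]
    exact setIntegral_congr_fun mΩ fun x hx => by simp only [hΩ x hx]
  have c2 : (∫ x in Ω, |g x| ^ q) = 1 := by
    rw [← hnorm]
    exact setIntegral_congr_fun mΩ fun x hx => by simp only [hΩ x hx]
  have c3 : (∫ x in Ω, ‖fderiv ℝ g x‖ ^ p) = muPQ p q Ω := by
    rw [← hmin]
    exact setIntegral_congr_fun mΩ fun x hx => by simp only [hev x hx]
  constructor
  · intro x hx hux
    have e : {y | y ∈ Ω ∧ 0 < u y} = {y | y ∈ Ω ∧ 0 < g y} := by
      ext y
      exact and_congr_right fun hy => by rw [hΩ y hy]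
    rw [e]
    exact pos_case hN hp hpq hq hΩo hΩb hΩc hg c1 c2 c3 x hx (by rwa [hΩ x hx])
  · intro x hx hux
    have e : {y | y ∈ Ω ∧ u y < 0} = {y | y ∈ Ω ∧ 0 < (fun z => -g z) y} := by
      ext y
      exact and_congr_right fun hy => by rw [← hΩ y hy]; exact neg_pos.symm
    rw [e]
    have hg' : LipschitzWith K (fun z => -g z) := hg.neg
    refine pos_case hN hp hpq hq hΩo hΩb hΩc hg' ?_ ?_ ?_ x hx ?_
    · simp only [abs_neg, mul_neg]
      rw [integral_neg, c1, neg_zero]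
    · simp only [abs_neg]
      exact c2
    · rw [← c3]
      congr 1
      ext y
      rw [fderiv_fun_neg, norm_neg]
    · have := hΩ x hx
      linarith
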